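/- arXiv:alg-geom/9603011 — 9 statements merged into one kernel-verified Lean document; each statement's English description precedes it below -/
import Mathlib

section
/- Let a ≥ -1 be an integer and let f, g ∈ S be homogeneous polynomials of degree a+1 with no common zeros along Y. Then there is a (necessarily unique) S-module homomorphism u from the ideal (x,y) to S/(x,y) satisfying u(x) = f + (x,y) and u(y) = g + (x,y), and the kernel of u is exactly the ideal (x², xy, y², xg − yf), regarded as an S-submodule of (x,y). (This kernel is the saturated homogeneous ideal of a locally Cohen–Macaulay multiplicity-two structure Z on the line Y.) -/
open MvPolynomial

/-- The pair `(f, g)` has no common zeros along the line `Y = {x = y = 0}`: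
at every point `(0,0,c,d)` with `(c,d) ≠ (0,0)`, one of `f`, `g` is nonzero. -/
def NoCommonZerosAlongY {k : Type*} [Field k] (f g : MvPolynomial (Fin 4) k) : Prop :=
  ∀ c d : k, (c, d) ≠ (0, 0) → eval ![0, 0, c, d] f ≠ 0 ∨ eval ![0, 0, c, d] g ≠ 0

/-!
A derivation `D : S → S/I` restricts to an `S`-linear map `I → S/I`, since the term `s • D r` of the
Leibniz rule vanishes for `s ∈ I`; this produces `u` without computing the relations between `x` and
`y`. An element `p x + q y` lies in the kernel of `u` iff `(p, q)` restricts on `Y` to a syzygy of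
`(f, g)`. As `S/I` is a polynomial ring, hence factorial, and `f`, `g` restrict to coprime elements
by the Nullstellensatz, such a syzygy is a multiple `c (g, -f)` of the Koszul one, so that
`p x + q y ≡ c (x g - y f)` modulo `I²`.
-/

section Coprime

variable {R : Type*} [CommRing R] [DecompositionMonoid R]

lemma exists_eq_mul_and_eq_neg_mul_of_isRelPrime [NoZeroDivisors R] {f g p q : R}
    (hfg : IsRelPrime f g) (h : p * f + q * g = 0) : ∃ c, p = c * g ∧ q = -(c * f) := by
  obtain rfl | hg := eq_or_ne g 0
  · obtain ⟨v, hv⟩ := (isRelPrime_zero_right.1 hfg).exists_left_inv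
    have hp : p = 0 := by linear_combination v * h - p * hv
    exact ⟨-(q * v), by simpa using hp, by linear_combination -q * hv⟩
  · obtain ⟨c, rfl⟩ : g ∣ p :=
      hfg.symm.dvd_of_dvd_mul_right ⟨-q, by linear_combination h⟩
    refine ⟨c, mul_comm g c, mul_right_cancel₀ hg ?_⟩
    linear_combination h

lemma isRelPrime_of_mem_radical_span_pair {a b f g : R} (hab : IsRelPrime a b)
    (ha : a ∈ (Ideal.span {f, g}).radical) (hb : b ∈ (Ideal.span {f, g}).radical) :
    IsRelPrime f g := by
  intro d hdf hdg
  have hle : Ideal.span {f, g} ≤ Ideal.span {d} := by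
    simp [Ideal.span_le, Set.insert_subset_iff, Ideal.mem_span_singleton, hdf, hdg]
  obtain ⟨m, hm⟩ := ha
  obtain ⟨n, hn⟩ := hb
  exact hab.pow (Ideal.mem_span_singleton.1 (hle hm)) (Ideal.mem_span_singleton.1 (hle hn))

end Coprime

section SpanPair

variable {R : Type*} [CommRing R] {x y : R}

section Module

variable {M : Type*} [AddCommGroup M] [Module R M]

lemma map_mul_add_mul_span_pair (u : Ideal.span {x, y} →ₗ[R] M) (p q : R)
    (h : p * x + q * y ∈ Ideal.span {x, y}) :
    u ⟨p * x + q * y, h⟩ = p • u ⟨x, Ideal.subset_span (by simp)⟩ +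
      q • u ⟨y, Ideal.subset_span (by simp)⟩ := by
  rw [← map_smul, ← map_smul, ← map_add]
  rfl

lemma linearMap_span_pair_ext {u v : Ideal.span {x, y} →ₗ[R] M}
    (hx : u ⟨x, Ideal.subset_span (by simp)⟩ = v ⟨x, Ideal.subset_span (by simp)⟩)
    (hy : u ⟨y, Ideal.subset_span (by simp)⟩ = v ⟨y, Ideal.subset_span (by simp)⟩) : u = v := by
  ext ⟨s, hs⟩
  obtain ⟨p, q, rfl⟩ := Ideal.mem_span_pair.1 hs
  simp only [map_mul_add_mul_span_pair, hx, hy]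

end Module

variable {f g : R}

lemma mul_add_mul_mem_span_of_sub_mem {p q c : R} (hp : p - c * g ∈ Ideal.span {x, y})
    (hq : q + c * f ∈ Ideal.span {x, y}) :
    p * x + q * y ∈ Ideal.span {x ^ 2, x * y, y ^ 2, x * g - y * f} := by
  obtain ⟨p₁, p₂, hp⟩ := Ideal.mem_span_pair.1 hp
  obtain ⟨q₁, q₂, hq⟩ := Ideal.mem_span_pair.1 hq
  simp only [Ideal.mem_span_insert, Ideal.mem_span_singleton']
  refine ⟨p₁, _, ⟨p₂ + q₁, _, ⟨q₂, _, ⟨c, rfl⟩, rfl⟩, rfl⟩, ?_⟩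
  linear_combination -x * hp - y * hq

lemma exists_eq_mul_add_mul_of_mem_span {s : R}
    (hs : s ∈ Ideal.span {x ^ 2, x * y, y ^ 2, x * g - y * f}) :
    ∃ p q, s = p * x + q * y ∧ p * f + q * g ∈ Ideal.span {x, y} := by
  simp only [Ideal.mem_span_insert, Ideal.mem_span_singleton'] at hs
  obtain ⟨a, _, ⟨b, _, ⟨c, _, ⟨d, rfl⟩, rfl⟩, rfl⟩, rfl⟩ := hs
  exact ⟨a * x + b * y + d * g, c * y - d * f, by ring,
    Ideal.mem_span_pair.2 ⟨a * f, b * f + c * g, by ring⟩⟩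

lemma ker_eq_comap_span_of_isRelPrime [IsDomain (R ⧸ Ideal.span {x, y})]
    [DecompositionMonoid (R ⧸ Ideal.span {x, y})]
    (hfg : IsRelPrime (Ideal.Quotient.mk (Ideal.span {x, y}) f) (Ideal.Quotient.mk _ g))
    {u : Ideal.span {x, y} →ₗ[R] R ⧸ Ideal.span {x, y}}
    (hx : u ⟨x, Ideal.subset_span (by simp)⟩ = Ideal.Quotient.mk _ f)
    (hy : u ⟨y, Ideal.subset_span (by simp)⟩ = Ideal.Quotient.mk _ g) :
    LinearMap.ker u = Submodule.comap (Submodule.subtype (Ideal.span {x, y}))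
      (Ideal.span {x ^ 2, x * y, y ^ 2, x * g - y * f}) := by
  have hu (p q : R) (h : p * x + q * y ∈ Ideal.span {x, y}) :
      u ⟨p * x + q * y, h⟩ = Ideal.Quotient.mk _ (p * f + q * g) := by
    rw [map_mul_add_mul_span_pair, hx, hy]
    rfl
  ext ⟨s, hs⟩
  rw [LinearMap.mem_ker, Submodule.mem_comap, Submodule.subtype_apply]
  constructor
  · intro hus
    obtain ⟨p, q, rfl⟩ := Ideal.mem_span_pair.1 hs
    rw [hu, map_add, map_mul, map_mul] at hus
    obtain ⟨c, hp, hq⟩ := exists_eq_mul_and_eq_neg_mul_of_isRelPrime hfg hus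
    obtain ⟨c, rfl⟩ := Ideal.Quotient.mk_surjective c
    apply mul_add_mul_mem_span_of_sub_mem (c := c) <;> rw [← Ideal.Quotient.eq_zero_iff_mem]
    · simp [hp]
    · simp [hq]
  · intro hsK
    obtain ⟨p, q, rfl, hpq⟩ := exists_eq_mul_add_mul_of_mem_span hsK
    rw [hu, Ideal.Quotient.eq_zero_iff_mem.2 hpq]

end SpanPair

/-- The `R`-linear map `I → R ⧸ I` obtained by restricting a derivation `R → R ⧸ I` to `I`. It
corresponds to the image of the derivation in the normal module `Hom(I / I², R ⧸ I)`. -/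
def normalMap {A R : Type*} [CommSemiring A] [CommRing R] [Algebra A R] {I : Ideal R}
    (D : Derivation A R (R ⧸ I)) : I →ₗ[R] R ⧸ I where
  toFun s := D (s : R)
  map_add' s t := map_add D (s : R) t
  map_smul' r s := by
    have hs : (s : R) • D r = 0 := by
      rw [Algebra.smul_def, Ideal.Quotient.algebraMap_eq,
        Ideal.Quotient.eq_zero_iff_mem.2 s.2, zero_mul]
    simp [hs]

section Polynomial

variable {σ R : Type*} [CommRing R]

lemma exists_linearMap_apply_X_eq (I : Ideal (MvPolynomial σ R)) (v : σ → MvPolynomial σ R ⧸ I) :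
    ∃ u : I →ₗ[MvPolynomial σ R] MvPolynomial σ R ⧸ I, ∀ i (hi : X i ∈ I), u ⟨X i, hi⟩ = v i :=
  ⟨normalMap (mkDerivation R v), fun i _ ↦ mkDerivation_X R v i⟩

lemma killCompl_val_X {s : Set σ} {i : σ} (hi : i ∈ sᶜ) :
    killCompl (Subtype.val_injective : Function.Injective ((↑) : ↥sᶜ → σ)) (X i) =
      (X ⟨i, hi⟩ : MvPolynomial ↥sᶜ R) := by
  simpa using killCompl_rename_app Subtype.val_injective (X ⟨i, hi⟩ : MvPolynomial ↥sᶜ R)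

lemma span_X_image_le_ker_killCompl (s : Set σ) :
    (Ideal.span (X '' s) : Ideal (MvPolynomial σ R)) ≤
      RingHom.ker (killCompl (Subtype.val_injective : Function.Injective ((↑) : ↥sᶜ → σ))) := by
  rw [Ideal.span_le]
  rintro _ ⟨i, hi, rfl⟩
  simp [killCompl, hi]

/-- The coordinate ring of the coordinate subspace where the variables in `s` vanish is the
polynomial ring in the remaining variables. -/
noncomputable def quotientSpanXEquiv (s : Set σ) :
    (MvPolynomial σ R ⧸ (Ideal.span (X '' s) : Ideal (MvPolynomial σ R))) ≃ₐ[R]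
      MvPolynomial ↥sᶜ R :=
  AlgEquiv.ofAlgHom
    (Ideal.Quotient.liftₐ _ (killCompl Subtype.val_injective) fun _ hp ↦
      span_X_image_le_ker_killCompl s hp)
    ((Ideal.Quotient.mkₐ R _).comp (rename Subtype.val))
    (killCompl_comp_rename Subtype.val_injective)
    (Ideal.Quotient.algHom_ext _ <| algHom_ext fun i ↦ by
      change Ideal.Quotient.mk _ (rename _ (killCompl _ (X i))) = Ideal.Quotient.mk _ (X i)
      by_cases hi : i ∈ s
      · have hXi : X i ∈ (Ideal.span (X '' s) : Ideal (MvPolynomial σ R)) :=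
          Ideal.subset_span (Set.mem_image_of_mem X hi)
        rw [span_X_image_le_ker_killCompl s hXi, map_zero, map_zero,
          Ideal.Quotient.eq_zero_iff_mem.2 hXi]
      · rw [killCompl_val_X hi, rename_X])

lemma quotientSpanXEquiv_mk_X {s : Set σ} {i : σ} (hi : i ∈ sᶜ) :
    quotientSpanXEquiv s (Ideal.Quotient.mk _ (X i)) = (X ⟨i, hi⟩ : MvPolynomial ↥sᶜ R) :=
  killCompl_val_X hi

variable [IsDomain R]

lemma isRelPrime_X {i j : σ} (hij : i ≠ j) :
    IsRelPrime (X i : MvPolynomial σ R) (X j) :=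
  X_prime.irreducible.isRelPrime_iff_not_dvd.2 (by simpa [X_dvd_X] using hij)

lemma isRelPrime_mk_X {s : Set σ} {i j : σ} (hi : i ∈ sᶜ) (hj : j ∈ sᶜ) (hij : i ≠ j) :
    IsRelPrime (Ideal.Quotient.mk (Ideal.span (X '' s : Set (MvPolynomial σ R))) (X i))
      (Ideal.Quotient.mk _ (X j)) := by
  apply IsRelPrime.of_map (quotientSpanXEquiv s)
  rw [quotientSpanXEquiv_mk_X hi, quotientSpanXEquiv_mk_X hj]
  exact isRelPrime_X (by simpa using hij)

instance isDomain_quotient_span_X (s : Set σ) :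
    IsDomain (MvPolynomial σ R ⧸ (Ideal.span (X '' s) : Ideal (MvPolynomial σ R))) :=
  (quotientSpanXEquiv s).toMulEquiv.isDomain _

instance uniqueFactorizationMonoid_quotient_span_X [UniqueFactorizationMonoid R] (s : Set σ) :
    UniqueFactorizationMonoid
      (MvPolynomial σ R ⧸ (Ideal.span (X '' s) : Ideal (MvPolynomial σ R))) :=
  (quotientSpanXEquiv s).symm.toMulEquiv.uniqueFactorizationMonoid inferInstance

end Polynomial

section Nullstellensatz

variable {σ k : Type*} [Finite σ] [Field k] [IsAlgClosed k]

lemma X_mem_radical_of_zeroLocus_subset_zero {J : Ideal (MvPolynomial σ k)}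
    (hJ : zeroLocus k J ⊆ {0}) (i : σ) : X i ∈ J.radical := by
  rw [← vanishingIdeal_zeroLocus_eq_radical (K := k), mem_vanishingIdeal_iff]
  intro v hv
  simp [show v = 0 from hJ hv]

lemma isRelPrime_mk_of_forall_eval_eq_zero {s : Set σ} (hs : sᶜ.Nontrivial)
    {f g : MvPolynomial σ k}
    (hfg : ∀ v : σ → k, (∀ i ∈ s, v i = 0) → eval v f = 0 → eval v g = 0 → v = 0) :
    IsRelPrime (Ideal.Quotient.mk (Ideal.span (X '' s)) f) (Ideal.Quotient.mk _ g) := by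
  have hzero : zeroLocus k (Ideal.span (X '' s) ⊔ Ideal.span {f, g}) ⊆ {0} := by
    intro v hv
    rw [← Ideal.span_union, zeroLocus_span] at hv
    refine hfg v (fun i hi ↦ ?_) (hv f (by simp)) (hv g (by simp))
    simpa using hv (X i) (.inl (Set.mem_image_of_mem X hi))
  have hrad (i : σ) : Ideal.Quotient.mk (Ideal.span (X '' s)) (X i) ∈
      (Ideal.span {Ideal.Quotient.mk (Ideal.span (X '' s)) f, Ideal.Quotient.mk _ g}).radical := by
    have hmap := Ideal.mem_map_of_mem (Ideal.Quotient.mk (Ideal.span (X '' s)))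
      (X_mem_radical_of_zeroLocus_subset_zero hzero i)
    have hmem := Ideal.map_radical_le (Ideal.Quotient.mk (Ideal.span (X '' s))) hmap
    rwa [Ideal.map_sup, Ideal.map_quotient_self, bot_sup_eq, Ideal.map_span, Set.image_pair]
      at hmem
  obtain ⟨i, hi, j, hj, hij⟩ := hs
  exact isRelPrime_of_mem_radical_span_pair (isRelPrime_mk_X hi hj hij) (hrad i) (hrad j)

end Nullstellensatz

lemma NoCommonZerosAlongY.isRelPrime_mk {k : Type*} [Field k] [IsAlgClosed k]
    {f g : MvPolynomial (Fin 4) k} (hfg : NoCommonZerosAlongY f g) :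
    IsRelPrime (Ideal.Quotient.mk (Ideal.span {X 0, X 1}) f) (Ideal.Quotient.mk _ g) := by
  rw [← Set.image_pair]
  apply isRelPrime_mk_of_forall_eval_eq_zero ⟨2, by simp, 3, by simp, by simp⟩
  intro v hv hf hg
  have hv0 : v 0 = 0 := hv 0 (by simp)
  have hv1 : v 1 = 0 := hv 1 (by simp)
  have hvY : v = ![0, 0, v 2, v 3] := by ext i; fin_cases i <;> simp [hv0, hv1]
  by_contra hne
  have hpt : (v 2, v 3) ≠ (0, 0) := by
    intro h
    obtain ⟨h2, h3⟩ := Prod.mk.inj h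
    exact hne (by ext i; fin_cases i <;> simp [hv0, hv1, h2, h3])
  rcases hfg _ _ hpt with h | h <;> rw [← hvY] at h
  · exact h hf
  · exact h hg

theorem stmt_0_general {σ R : Type*} [CommRing R] [IsDomain R] [UniqueFactorizationMonoid R]
    {i j : σ} (hij : i ≠ j) (f g : MvPolynomial σ R)
    (hfg : IsRelPrime (Ideal.Quotient.mk (Ideal.span {X i, X j}) f) (Ideal.Quotient.mk _ g)) :
    ∃ u : (Ideal.span {X i, X j} : Ideal (MvPolynomial σ R)) →ₗ[MvPolynomial σ R]
        (MvPolynomial σ R ⧸ (Ideal.span {X i, X j} : Ideal (MvPolynomial σ R))),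
      (u ⟨X i, Ideal.subset_span (by simp)⟩ = Ideal.Quotient.mk _ f ∧
        u ⟨X j, Ideal.subset_span (by simp)⟩ = Ideal.Quotient.mk _ g) ∧
      (∀ u' : (Ideal.span {X i, X j} : Ideal (MvPolynomial σ R)) →ₗ[MvPolynomial σ R]
          (MvPolynomial σ R ⧸ (Ideal.span {X i, X j} : Ideal (MvPolynomial σ R))),
        (u' ⟨X i, Ideal.subset_span (by simp)⟩ = Ideal.Quotient.mk _ f ∧
          u' ⟨X j, Ideal.subset_span (by simp)⟩ = Ideal.Quotient.mk _ g) → u' = u) ∧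
      LinearMap.ker u = Submodule.comap
        (Submodule.subtype (Ideal.span {X i, X j} : Ideal (MvPolynomial σ R)))
        (Ideal.span {X i ^ 2, X i * X j, X j ^ 2, X i * g - X j * f}) := by
  classical
  have hdom := isDomain_quotient_span_X (R := R) {i, j}
  have hufm := uniqueFactorizationMonoid_quotient_span_X (R := R) {i, j}
  rw [Set.image_pair] at hdom hufm
  obtain ⟨u, hu⟩ := exists_linearMap_apply_X_eq (Ideal.span {X i, X j})
    (Function.update (fun _ ↦ Ideal.Quotient.mk _ g) i (Ideal.Quotient.mk _ f))
  have hui : u ⟨X i, Ideal.subset_span (by simp)⟩ = Ideal.Quotient.mk _ f := by simp [hu]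
  have huj : u ⟨X j, Ideal.subset_span (by simp)⟩ = Ideal.Quotient.mk _ g := by
    simp [hu, hij.symm]
  exact ⟨u, ⟨hui, huj⟩,
    fun u' hu' ↦ linearMap_span_pair_ext (hu'.1.trans hui.symm) (hu'.2.trans huj.symm),
    ker_eq_comap_span_of_isRelPrime hfg hui huj⟩

/-- for `a ≥ -1` and `f, g` homogeneous of degree `a+1` with no common
zeros along `Y`, there is a unique `S`-module homomorphism `u : (x,y) → S/(x,y)` with
`u(x) = f̄`, `u(y) = ḡ`, and its kernel is the ideal `(x², xy, y², xg − yf)`. -/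
theorem stmt_0 {k : Type*} [Field k] [IsAlgClosed k] (a : ℤ) (ha : -1 ≤ a)
    (f g : MvPolynomial (Fin 4) k)
    (hf : f.IsHomogeneous (a + 1).toNat) (hg : g.IsHomogeneous (a + 1).toNat)
    (hfg : NoCommonZerosAlongY f g) :
    ∃ u : (Ideal.span {X 0, X 1} : Ideal (MvPolynomial (Fin 4) k)) →ₗ[MvPolynomial (Fin 4) k]
        (MvPolynomial (Fin 4) k ⧸ (Ideal.span {X 0, X 1} : Ideal (MvPolynomial (Fin 4) k))),
      (u ⟨X 0, Ideal.subset_span (by simp)⟩ = Ideal.Quotient.mk _ f ∧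
        u ⟨X 1, Ideal.subset_span (by simp)⟩ = Ideal.Quotient.mk _ g) ∧
      (∀ u' : (Ideal.span {X 0, X 1} : Ideal (MvPolynomial (Fin 4) k)) →ₗ[MvPolynomial (Fin 4) k]
          (MvPolynomial (Fin 4) k ⧸ (Ideal.span {X 0, X 1} : Ideal (MvPolynomial (Fin 4) k))),
        (u' ⟨X 0, Ideal.subset_span (by simp)⟩ = Ideal.Quotient.mk _ f ∧
          u' ⟨X 1, Ideal.subset_span (by simp)⟩ = Ideal.Quotient.mk _ g) → u' = u) ∧
      LinearMap.ker u = Submodule.comap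
        (Submodule.subtype (Ideal.span {X 0, X 1} : Ideal (MvPolynomial (Fin 4) k)))
        (Ideal.span {X 0 ^ 2, X 0 * X 1, X 1 ^ 2, X 0 * g - X 1 * f}) :=
  stmt_0_general zero_ne_one f g hfg.isRelPrime_mk
end

section
/- Let a ≥ -1 be an integer and let f, g ∈ S be homogeneous polynomials of degree a+1 with no common zeros along Y. Then for all sufficiently large n, the k-dimension of the degree-n graded component of S/(x², xy, y², xg − yf) equals 2n + 2 + a. (Equivalently, the double line Z with saturated ideal I_Z = (x², xy, y², xg − yf) is a curve of degree 2 and arithmetic genus −1−a.) -/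
open MvPolynomial

/-- The `k`-dimension of the degree-`n` graded piece of `S ⧸ I`, realized as the image of
the space of degree-`n` homogeneous polynomials in the quotient. -/
noncomputable def gradedPieceDim (k : Type*) [Field k] (I : Ideal (MvPolynomial (Fin 4) k))
    (n : ℕ) : ℕ :=
  Module.finrank k
    ((homogeneousSubmodule (Fin 4) k n).map (Ideal.Quotient.mkₐ k I).toLinearMap)

/-!
Modulo `(x, y)²` a polynomial on `ℙ³` is determined by its restriction to `Y` and the restrictions
of its two normal derivatives, so `S / (x, y)² ≅ B ⊕ B(-1)²` with `B = k[z, w]`. Under this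
identification `xg - yf` generates the submodule `B · (0, g|_Y, -f|_Y)`, which is free of rank one
as soon as `f` or `g` is nonzero on `Y`. In degree `n > m = deg f = deg g` the quotient
therefore has dimension `(n + 1) + 2 n - (n - m) = 2 n + 1 + m`.
-/

namespace DoubleLine

section LinearAlgebra

instance {R M N : Type*} [Semiring R] [AddCommMonoid M] [Module R M] [AddCommMonoid N] [Module R N]
    (p : Submodule R M) (q : Submodule R N) [hp : Module.Finite R p] [hq : Module.Finite R q] :
    Module.Finite R (p.prod q) :=
  Module.Finite.iff_fg.mpr ((Module.Finite.iff_fg.mp hp).prod (Module.Finite.iff_fg.mp hq))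

variable {K V W : Type*} [DivisionRing K] [AddCommGroup V] [Module K V]
  [AddCommGroup W] [Module K W]

theorem finrank_submodule_prod (p : Submodule K V) (q : Submodule K W)
    [FiniteDimensional K p] [FiniteDimensional K q] :
    Module.finrank K (p.prod q) = Module.finrank K p + Module.finrank K q := by
  have hrange : LinearMap.range (p.subtype.prodMap q.subtype) = p.prod q := by
    rw [LinearMap.range_prodMap, p.range_subtype, q.range_subtype]
  rw [← hrange, LinearMap.finrank_range_of_inj
    (p.subtype_injective.prodMap q.subtype_injective), Module.finrank_prod]

theorem finrank_map_add_finrank_inf_ker (φ : V →ₗ[K] W) (p : Submodule K V)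
    [FiniteDimensional K p] :
    Module.finrank K (p.map φ) + Module.finrank K (p ⊓ LinearMap.ker φ : Submodule K V) =
      Module.finrank K p := by
  rw [← (φ.domRestrict p).finrank_range_add_finrank_ker, LinearMap.range_domRestrict,
    LinearMap.ker_domRestrict, ← Submodule.finrank_map_subtype_eq, Submodule.map_comap_subtype]

end LinearAlgebra

section Homogeneous

variable {σ R : Type*} [CommSemiring R]

instance [Finite σ] (n : ℕ) : Module.Finite R (homogeneousSubmodule σ R n) :=
  Module.Finite.iff_fg.mpr (homogeneousSubmodule_fg σ R n)

theorem finrank_homogeneousSubmodule [Fintype σ] [Nontrivial R] (n : ℕ) :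
    Module.finrank R (homogeneousSubmodule σ R n) = (Fintype.card σ).multichoose n := by
  classical
  have hdegree : {d : σ →₀ ℕ | d.degree = n} =
      ((Finset.univ : Finset σ).finsuppAntidiag n : Set (σ →₀ ℕ)) := by
    ext d
    simp [Finsupp.degree_eq_sum]
  have hsupport : homogeneousSubmodule σ R n = restrictSupport R {d : σ →₀ ℕ | d.degree = n} :=
    homogeneousSubmodule_eq_finsupp_supported σ R n
  rw [hsupport, Module.finrank_eq_nat_card_basis (basisRestrictSupport R _), hdegree,
    Nat.card_coe_set_eq, Set.ncard_coe_finset, Finset.card_finsuppAntidiag_nat_eq_multichoose,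
    Finset.card_univ]

attribute [local instance] MvPolynomial.gradedAlgebra in
theorem homogeneousComponent_add_mul {p q : MvPolynomial σ R} {m : ℕ} (hq : q.IsHomogeneous m)
    (i : ℕ) : homogeneousComponent (i + m) (p * q) = homogeneousComponent i p * q := by
  rw [← decomposition.decompose'_apply, ← decomposition.decompose'_apply]
  exact DirectSum.coe_decompose_mul_add_of_right_mem (homogeneousSubmodule σ R) hq

end Homogeneous

section Jets

variable {R : Type*} [CommRing R]

/-- Restriction of polynomials to the line `Y = {x = y = 0}`, with coordinate ring `R[z, w]`. -/
noncomputable def restrict : MvPolynomial (Fin 4) R →ₐ[R] MvPolynomial (Fin 2) R :=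
  aeval ![0, 0, X 0, X 1]

/-- The section `R[z, w] → R[x, y, z, w]` of `restrict`, i.e. pullback along the projection to `Y`
that forgets `x` and `y`. -/
noncomputable def extend : MvPolynomial (Fin 2) R →ₐ[R] MvPolynomial (Fin 4) R :=
  rename ![2, 3]

/-- First-order jets along `Y`: a restriction to `Y` and the two normal derivatives, in the
directions `x` and `y`. -/
abbrev JetSpace (R : Type*) [CommRing R] : Type _ :=
  MvPolynomial (Fin 2) R × MvPolynomial (Fin 2) R × MvPolynomial (Fin 2) R

/-- The first-order jet along `Y`: the restrictions to `Y` of a polynomial and of its derivatives in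
the normal directions `x` and `y`. -/
noncomputable def jet : MvPolynomial (Fin 4) R →ₗ[R] JetSpace R :=
  restrict.toLinearMap.prod
    ((restrict.toLinearMap ∘ₗ (pderiv 0).toLinearMap).prod
      (restrict.toLinearMap ∘ₗ (pderiv 1).toLinearMap))

/-- The polynomial `u + x v + y w` with prescribed first-order jet `(u, v, w)` along `Y`. -/
noncomputable def ofJet : JetSpace R →ₗ[R] MvPolynomial (Fin 4) R :=
  extend.toLinearMap.coprod
    ((LinearMap.mulLeft R (X 0) ∘ₗ extend.toLinearMap).coprod
      (LinearMap.mulLeft R (X 1) ∘ₗ extend.toLinearMap))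

theorem jet_apply (p : MvPolynomial (Fin 4) R) :
    jet p = (restrict p, restrict (pderiv 0 p), restrict (pderiv 1 p)) :=
  rfl

theorem ofJet_apply (u v w : MvPolynomial (Fin 2) R) :
    ofJet (u, v, w) = extend u + (X 0 * extend v + X 1 * extend w) :=
  rfl

@[simp]
theorem restrict_X (i : Fin 4) :
    restrict (X i : MvPolynomial (Fin 4) R) = ![0, 0, X 0, X 1] i :=
  aeval_X _ i

@[simp]
theorem restrict_extend (p : MvPolynomial (Fin 2) R) : restrict (extend p) = p := by
  have h : (![0, 0, X 0, X 1] : Fin 4 → MvPolynomial (Fin 2) R) ∘ ![2, 3] = X := by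
    ext1 i
    fin_cases i <;> rfl
  rw [restrict, extend, aeval_rename, h, aeval_X_left_apply]

@[simp]
theorem extend_X (i : Fin 2) : extend (X i : MvPolynomial (Fin 2) R) = X (![2, 3] i) :=
  rename_X _ i

theorem eval_restrict (c d : R) (p : MvPolynomial (Fin 4) R) :
    eval ![c, d] (restrict p) = eval ![0, 0, c, d] p := by
  have h : (aeval ![c, d]).comp restrict = aeval (R := R) ![0, 0, c, d] := by
    ext i
    fin_cases i <;> simp
  exact DFunLike.congr_fun h p

theorem pderiv_extend {i : Fin 4} (hi : i ∉ Set.range ![2, 3]) (p : MvPolynomial (Fin 2) R) :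
    pderiv i (extend p) = 0 := by
  refine pderiv_eq_zero_of_notMem_vars fun hmem => hi ?_
  obtain ⟨j, -, rfl⟩ := Finset.mem_image.mp (vars_rename _ p hmem)
  exact ⟨j, rfl⟩

@[simp]
theorem pderiv_zero_extend (p : MvPolynomial (Fin 2) R) : pderiv 0 (extend p) = 0 :=
  pderiv_extend (by simp) p

@[simp]
theorem pderiv_one_extend (p : MvPolynomial (Fin 2) R) : pderiv 1 (extend p) = 0 :=
  pderiv_extend (by simp) p

theorem jet_ofJet (t : JetSpace R) : jet (ofJet t) = t := by
  obtain ⟨u, v, w⟩ := t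
  simp [ofJet_apply, jet_apply, pderiv_X]

theorem sub_ofJet_jet_mem (p : MvPolynomial (Fin 4) R) :
    p - ofJet (jet p) ∈ Ideal.span {X 0 ^ 2, X 0 * X 1, X 1 ^ 2} := by
  set J : Ideal (MvPolynomial (Fin 4) R) := Ideal.span {X 0 ^ 2, X 0 * X 1, X 1 ^ 2}
  have hxx : X 0 ^ 2 ∈ J := Ideal.subset_span (by simp)
  have hxy : X 0 * X 1 ∈ J := Ideal.subset_span (by simp)
  have hyy : X 1 ^ 2 ∈ J := Ideal.subset_span (by simp)
  induction p using MvPolynomial.induction_on with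
  | C c => simp [jet_apply, ofJet_apply, restrict, extend, algebraMap_eq]
  | add p q hp hq => simpa only [map_add, add_sub_add_comm] using J.add_mem hp hq
  | mul_X p i hp =>
    set v := extend (restrict (pderiv 0 p))
    set w := extend (restrict (pderiv 1 p))
    have hX : p * X i - ofJet (jet (p * X i)) = (p - ofJet (jet p)) * X i +
        ![X 0 ^ 2 * v + X 0 * X 1 * w, X 0 * X 1 * v + X 1 ^ 2 * w, 0, 0] i := by
      fin_cases i <;> simp [jet_apply, ofJet_apply, pderiv_X, v, w] <;> ring
    rw [hX]
    refine J.add_mem (J.mul_mem_right _ hp) ?_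
    fin_cases i
    · exact J.add_mem (J.mul_mem_right v hxx) (J.mul_mem_right w hxy)
    · exact J.add_mem (J.mul_mem_right v hxy) (J.mul_mem_right w hyy)
    · exact J.zero_mem
    · exact J.zero_mem

end Jets

section HomogeneousJets

variable {R : Type*} [CommRing R]

theorem isHomogeneous_restrict {p : MvPolynomial (Fin 4) R} {n : ℕ} (hp : p.IsHomogeneous n) :
    (restrict p).IsHomogeneous n := by
  have hX (i : Fin 4) : (![0, 0, X 0, X 1] i : MvPolynomial (Fin 2) R).IsHomogeneous 1 := by
    fin_cases i
    exacts [isHomogeneous_zero _ _ _, isHomogeneous_zero _ _ _, isHomogeneous_X _ _,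
      isHomogeneous_X _ _]
  simpa only [restrict, one_mul] using hp.aeval _ hX

/-- The jets of homogeneous polynomials of degree `n + 1`; differentiation lowers the degree of the
last two components. -/
noncomputable def homogeneousJets (R : Type*) [CommRing R] (n : ℕ) : Submodule R (JetSpace R) :=
  (homogeneousSubmodule (Fin 2) R (n + 1)).prod
    ((homogeneousSubmodule (Fin 2) R n).prod (homogeneousSubmodule (Fin 2) R n))

theorem jet_mem_homogeneousJets {p : MvPolynomial (Fin 4) R} {n : ℕ}
    (hp : p.IsHomogeneous (n + 1)) : jet p ∈ homogeneousJets R n :=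
  ⟨isHomogeneous_restrict hp, isHomogeneous_restrict hp.pderiv, isHomogeneous_restrict hp.pderiv⟩

theorem isHomogeneous_ofJet {t : JetSpace R} {n : ℕ} (ht : t ∈ homogeneousJets R n) :
    (ofJet t).IsHomogeneous (n + 1) := by
  obtain ⟨hu, hv, hw⟩ := ht
  have hmul (i : Fin 4) {v : MvPolynomial (Fin 2) R} (hv : v.IsHomogeneous n) :
      (X i * extend v).IsHomogeneous (n + 1) :=
    add_comm 1 n ▸ (isHomogeneous_X R i).mul hv.rename_isHomogeneous
  exact hu.rename_isHomogeneous.add ((hmul 0 hv).add (hmul 1 hw))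

instance (n : ℕ) : Module.Finite R (homogeneousJets R n) :=
  inferInstanceAs (Module.Finite R ((homogeneousSubmodule (Fin 2) R (n + 1)).prod
    ((homogeneousSubmodule (Fin 2) R n).prod (homogeneousSubmodule (Fin 2) R n))))

theorem finrank_homogeneousJets (k : Type*) [Field k] (n : ℕ) :
    Module.finrank k (homogeneousJets k n) = 3 * n + 4 := by
  rw [homogeneousJets, finrank_submodule_prod, finrank_submodule_prod]
  simp only [finrank_homogeneousSubmodule, Fintype.card_fin, Nat.multichoose_two]
  ring

end HomogeneousJets

section DoubleLineIdeal

variable {R : Type*} [CommRing R]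

/-- The ideal `(x², xy, y², xg - yf)` of the double structure on `Y` determined by `f` and `g`. -/
noncomputable abbrev doubleLineIdeal (f g : MvPolynomial (Fin 4) R) :
    Ideal (MvPolynomial (Fin 4) R) :=
  Ideal.span {X 0 ^ 2, X 0 * X 1, X 1 ^ 2, X 0 * g - X 1 * f}

/-- The multiples `h ↦ h • (0, g, -f)` of the jet of `xg - yf`, for `f` and `g` already restricted
to `Y`. -/
noncomputable def relation (f g : MvPolynomial (Fin 2) R) :
    MvPolynomial (Fin 2) R →ₗ[R] JetSpace R :=
  (LinearMap.toSpanSingleton (MvPolynomial (Fin 2) R) _ (0, g, -f)).restrictScalars R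

theorem relation_apply (f g h : MvPolynomial (Fin 2) R) :
    relation f g h = (0, h * g, -(h * f)) := by
  simp [relation]

theorem relation_injective [IsDomain R] {f g : MvPolynomial (Fin 2) R} (hfg : f ≠ 0 ∨ g ≠ 0) :
    Function.Injective (relation f g) := by
  refine (injective_iff_map_eq_zero _).mpr fun h hh => ?_
  obtain ⟨hg, hf⟩ : (h = 0 ∨ g = 0) ∧ (h = 0 ∨ f = 0) := by
    simpa [relation_apply, Prod.ext_iff] using hh
  tauto

theorem jet_extend_mul_generator (f g : MvPolynomial (Fin 4) R) (h : MvPolynomial (Fin 2) R) :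
    jet (extend h * (X 0 * g - X 1 * f)) = relation (restrict f) (restrict g) h := by
  simp [jet_apply, relation_apply, pderiv_X]

theorem mem_doubleLineIdeal_iff {f g p : MvPolynomial (Fin 4) R} :
    p ∈ doubleLineIdeal f g ↔ jet p ∈ LinearMap.range (relation (restrict f) (restrict g)) := by
  constructor
  · intro hp
    simp only [Ideal.mem_span_insert, Ideal.mem_span_singleton'] at hp
    obtain ⟨a, _, ⟨b, _, ⟨c, _, ⟨d, rfl⟩, rfl⟩, rfl⟩, rfl⟩ := hp
    exact ⟨restrict d, by simp [jet_apply, relation_apply, pderiv_X]⟩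
  · rintro ⟨h, hh⟩
    set q := extend h * (X 0 * g - X 1 * f)
    have hq : q ∈ doubleLineIdeal f g := Ideal.mul_mem_left _ _ (Ideal.subset_span (by simp))
    have hjet : jet (p - q) = 0 := by rw [map_sub, jet_extend_mul_generator, hh, sub_self]
    have hsub : p - q ∈ doubleLineIdeal f g := by
      have hmem := sub_ofJet_jet_mem (p - q)
      rw [hjet, map_zero, sub_zero] at hmem
      exact Ideal.span_mono (by grind) hmem
    exact (Submodule.sub_mem_iff_left _ hq).mp hsub

/-- The class of the polynomial with a given jet in `S / (x², xy, y², xg - yf)`. -/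
noncomputable def jetClass (f g : MvPolynomial (Fin 4) R) :
    JetSpace R →ₗ[R] MvPolynomial (Fin 4) R ⧸ doubleLineIdeal f g :=
  (Ideal.Quotient.mkₐ R (doubleLineIdeal f g)).toLinearMap ∘ₗ ofJet

theorem ker_jetClass (f g : MvPolynomial (Fin 4) R) :
    LinearMap.ker (jetClass f g) = LinearMap.range (relation (restrict f) (restrict g)) := by
  ext t
  have hmk : t ∈ LinearMap.ker (jetClass f g) ↔ ofJet t ∈ doubleLineIdeal f g :=
    Ideal.Quotient.eq_zero_iff_mem
  rw [hmk, mem_doubleLineIdeal_iff, jet_ofJet]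

theorem jetClass_jet (f g p : MvPolynomial (Fin 4) R) :
    jetClass f g (jet p) = Ideal.Quotient.mkₐ R (doubleLineIdeal f g) p := by
  refine ((Ideal.Quotient.mk_eq_mk_iff_sub_mem _ _).mpr ?_).symm
  exact Ideal.span_mono (by grind) (sub_ofJet_jet_mem p)

theorem map_jetClass_homogeneousJets (f g : MvPolynomial (Fin 4) R) (n : ℕ) :
    (homogeneousJets R n).map (jetClass f g) = (homogeneousSubmodule (Fin 4) R (n + 1)).map
      (Ideal.Quotient.mkₐ R (doubleLineIdeal f g)).toLinearMap := by
  apply le_antisymm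
  · rintro _ ⟨t, ht, rfl⟩
    exact ⟨ofJet t, isHomogeneous_ofJet ht, rfl⟩
  · rintro _ ⟨p, hp, rfl⟩
    exact ⟨jet p, jet_mem_homogeneousJets hp, jetClass_jet f g p⟩

theorem homogeneousJets_inf_range_relation {f g : MvPolynomial (Fin 2) R} {m : ℕ}
    (hf : f.IsHomogeneous m) (hg : g.IsHomogeneous m) (i : ℕ) :
    homogeneousJets R (i + m) ⊓ LinearMap.range (relation f g) =
      (homogeneousSubmodule (Fin 2) R i).map (relation f g) := by
  apply le_antisymm
  · rintro _ ⟨ht, h, rfl⟩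
    rw [relation_apply] at ht
    have hhg : (h * g).IsHomogeneous (i + m) := ht.2.1
    have hhf : (h * f).IsHomogeneous (i + m) := by simpa only [neg_neg] using ht.2.2.neg
    refine ⟨homogeneousComponent i h, homogeneousComponent_isHomogeneous i h, ?_⟩
    rw [relation_apply, relation_apply, ← homogeneousComponent_add_mul hf,
      ← homogeneousComponent_add_mul hg, homogeneousComponent_eq_self hhf,
      homogeneousComponent_eq_self hhg]
  · rintro _ ⟨h, hh, rfl⟩
    refine ⟨?_, h, rfl⟩
    rw [relation_apply]
    exact ⟨isHomogeneous_zero _ _ _, IsHomogeneous.mul hh hg, (IsHomogeneous.mul hh hf).neg⟩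

end DoubleLineIdeal

theorem restrict_ne_zero_of_noCommonZerosAlongY {k : Type*} [Field k]
    {f g : MvPolynomial (Fin 4) k} (hfg : NoCommonZerosAlongY f g) :
    restrict f ≠ 0 ∨ restrict g ≠ 0 := by
  refine (hfg 1 0 (by simp)).imp ?_ ?_ <;>
  · rw [← eval_restrict]
    exact ne_zero_of_map

end DoubleLine

open DoubleLine in
theorem stmt_1_general {k : Type*} [Field k] {m n : ℕ} {f g : MvPolynomial (Fin 4) k}
    (hf : f.IsHomogeneous m) (hg : g.IsHomogeneous m) (hfg : restrict f ≠ 0 ∨ restrict g ≠ 0)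
    (hmn : m < n) : gradedPieceDim k (doubleLineIdeal f g) n = 2 * n + 1 + m := by
  obtain ⟨i, rfl⟩ : ∃ i, n = i + m + 1 := ⟨n - (m + 1), by omega⟩
  have hrank := finrank_map_add_finrank_inf_ker (jetClass f g) (homogeneousJets k (i + m))
  rw [map_jetClass_homogeneousJets, ker_jetClass,
    homogeneousJets_inf_range_relation (isHomogeneous_restrict hf) (isHomogeneous_restrict hg),
    ← (Submodule.equivMapOfInjective _ (relation_injective hfg) _).finrank_eq,
    finrank_homogeneousJets, finrank_homogeneousSubmodule, Fintype.card_fin,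
    Nat.multichoose_two] at hrank
  rw [gradedPieceDim]
  omega

/-- the double line `Z` with ideal `(x², xy, y², xg − yf)` has Hilbert
polynomial `2n + 2 + a`, i.e. it is a curve of degree `2` and arithmetic genus `−1−a`. -/
theorem stmt_1 {k : Type*} [Field k] [IsAlgClosed k] (a : ℤ) (ha : -1 ≤ a)
    (f g : MvPolynomial (Fin 4) k)
    (hf : f.IsHomogeneous (a + 1).toNat) (hg : g.IsHomogeneous (a + 1).toNat)
    (hfg : NoCommonZerosAlongY f g) :
    ∃ N : ℕ, ∀ n : ℕ, N ≤ n →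
      (gradedPieceDim k (Ideal.span {X 0 ^ 2, X 0 * X 1, X 1 ^ 2, X 0 * g - X 1 * f}) n : ℤ)
        = 2 * n + 2 + a := by
  refine ⟨(a + 1).toNat + 1, fun n hn => ?_⟩
  rw [stmt_1_general hf hg (DoubleLine.restrict_ne_zero_of_noCommonZerosAlongY hfg) hn]
  omega
end

section
/- Let a ≥ -1 be an integer and let (f,g) and (f′,g′) be two pairs of homogeneous polynomials of degree a+1, each pair having no common zeros along Y. Then the ideals (x², xy, y², xg − yf) and (x², xy, y², xg′ − yf′) of S are equal if and only if there exists c ∈ k* such that f′ ≡ cf (mod (x,y)) and g′ ≡ cg (mod (x,y)). -/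
open MvPolynomial

/-!
Write `S` for the polynomial ring over `R` and `I = (x, y)`. Since `x, y` is a regular sequence,
`x * a - y * b ∈ I ^ 2` forces `a, b ∈ I`, so the ideal attached to `(f', g')` lies in the one
attached to `(f, g)` exactly when `(f', g') ≡ u (f, g)` modulo `I` for some polynomial `u`.
Comparing components in the common degree of the four forms, `u` may be replaced by its constant
term. Equality of the ideals thus means that the classes of `(f, g)` and `(f', g')` generate the
same `R`-submodule of `(S ⧸ I)²`, and generators of the same cyclic submodule of a torsion-free
module over a domain differ by a unit.
-/

section RegularSequence

variable {A : Type*} [CommRing A] {x y f g f' g' : A}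

/-- The ideal `(x², xy, y², xg - yf)`, which for the coordinates `x, y` cutting out a line is the
ideal of the double structure on that line attached to the pair `(f, g)`. -/
def doubleLineIdeal (x y f g : A) : Ideal A :=
  Ideal.span {x ^ 2, x * y, y ^ 2, x * g - y * f}

lemma span_pair_sq (x y : A) : Ideal.span {x, y} ^ 2 = Ideal.span {x ^ 2, x * y, y ^ 2} := by
  rw [sq, Ideal.span_pair_mul_span_pair, mul_comm y x, Set.insert_eq_of_mem (a := x * y) (by simp),
    sq, sq]

lemma doubleLineIdeal_eq_sup (x y f g : A) :
    doubleLineIdeal x y f g = Ideal.span {x * g - y * f} ⊔ Ideal.span {x, y} ^ 2 := by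
  rw [doubleLineIdeal, span_pair_sq, sup_comm, ← Ideal.span_union]
  simp only [Set.insert_union, Set.singleton_union]

lemma mul_sub_mul_mem_span_pair_sq_iff {a b : A} (hx : IsLeftRegular x)
    (hxy : ∀ c, x ∣ y * c → x ∣ c) :
    x * a - y * b ∈ Ideal.span {x, y} ^ 2 ↔ a ∈ Ideal.span {x, y} ∧ b ∈ Ideal.span {x, y} := by
  have hx_mem : x ∈ Ideal.span {x, y} := Ideal.subset_span (by simp)
  have hy_mem : y ∈ Ideal.span {x, y} := Ideal.subset_span (by simp)
  constructor
  · intro hmem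
    simp only [span_pair_sq, Ideal.mem_span_insert, Ideal.mem_span_singleton'] at hmem
    obtain ⟨p, _, ⟨q, _, ⟨r, rfl⟩, rfl⟩, h⟩ := hmem
    have syzygy : x * (a - p * x - q * y) = y * (b + r * y) := by linear_combination h
    obtain ⟨t, ht⟩ := hxy _ ⟨_, syzygy.symm⟩
    have ha : a - p * x - q * y = y * t := hx <|
      show x * (a - p * x - q * y) = x * (y * t) by linear_combination syzygy + y * ht
    simp only [Ideal.mem_span_pair]
    exact ⟨⟨p, q + t, by linear_combination -ha⟩, ⟨t, -r, by linear_combination -ht⟩⟩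
  · rintro ⟨ha, hb⟩
    rw [sq]
    exact sub_mem (Ideal.mul_mem_mul hx_mem ha) (Ideal.mul_mem_mul hy_mem hb)

lemma doubleLineIdeal_le_iff (hx : IsLeftRegular x) (hxy : ∀ c, x ∣ y * c → x ∣ c) :
    doubleLineIdeal x y f' g' ≤ doubleLineIdeal x y f g ↔
      ∃ u, f' - u * f ∈ Ideal.span {x, y} ∧ g' - u * g ∈ Ideal.span {x, y} := by
  have mem_iff : x * g' - y * f' ∈ doubleLineIdeal x y f g ↔
      ∃ u, x * g' - y * f' - u * (x * g - y * f) ∈ Ideal.span {x, y} ^ 2 := by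
    rw [doubleLineIdeal_eq_sup, Ideal.mem_span_singleton_sup]
    exact exists_congr fun u ↦
      ⟨fun ⟨b, hb, h⟩ ↦ by rwa [← h, add_sub_cancel_left], fun h ↦ ⟨_, h, by ring⟩⟩
  have sq_le : Ideal.span {x, y} ^ 2 ≤ doubleLineIdeal x y f g :=
    doubleLineIdeal_eq_sup x y f g ▸ le_sup_right
  rw [doubleLineIdeal_eq_sup x y f' g', sup_le_iff, Ideal.span_singleton_le_iff_mem,
    and_iff_left sq_le, mem_iff]
  refine exists_congr fun u ↦ ?_
  have regroup : x * g' - y * f' - u * (x * g - y * f) = x * (g' - u * g) - y * (f' - u * f) := by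
    ring
  rw [regroup, mul_sub_mul_mem_span_pair_sq_iff hx hxy, and_comm]

end RegularSequence

lemma sub_decompose_zero_mul_mem {ι σ A : Type*} [DecidableEq ι] [AddRightCancelMonoid ι]
    [Ring A] [SetLike σ A] [AddSubgroupClass σ A] {𝒜 : ι → σ} [GradedRing 𝒜] {I : Ideal A}
    (hI : I.IsHomogeneous 𝒜) {n : ι} {u a b : A} (ha : a ∈ 𝒜 n) (hb : b ∈ 𝒜 n)
    (h : b - u * a ∈ I) : b - DirectSum.decompose 𝒜 u 0 * a ∈ I := by
  have hn : (DirectSum.decompose 𝒜 (b - u * a) n : A) = b - DirectSum.decompose 𝒜 u 0 * a := by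
    have hmul := DirectSum.coe_decompose_mul_add_of_right_mem 𝒜 (a := u) (i := 0) ha
    rw [zero_add] at hmul
    rw [DirectSum.decompose_sub, DirectSum.sub_apply, AddSubgroupClass.coe_sub, hmul,
      DirectSum.decompose_of_mem_same 𝒜 hb]
  exact hn ▸ hI n h

lemma smul_quotient_mk_eq_iff {R S : Type*} [CommSemiring R] [CommRing S] [Algebra R S]
    {I : Ideal S} {c : R} {p q : S} :
    c • Ideal.Quotient.mk I p = Ideal.Quotient.mk I q ↔ q - c • p ∈ I := by
  rw [← Ideal.Quotient.mk_eq_mk_iff_sub_mem, eq_comm]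
  rfl

section Polynomial

attribute [local instance] MvPolynomial.gradedAlgebra

variable {σ R : Type*} [CommRing R]

lemma isHomogeneous_span_X_image (s : Set σ) :
    (Ideal.span (X '' s)).IsHomogeneous (homogeneousSubmodule σ R) := by
  refine Ideal.homogeneous_span _ _ ?_
  rintro _ ⟨i, -, rfl⟩
  exact ⟨1, isHomogeneous_X R i⟩

lemma sub_C_coeff_zero_mul_mem_span_X_image {s : Set σ} {n : ℕ} {u f f' : MvPolynomial σ R}
    (hf : f.IsHomogeneous n) (hf' : f'.IsHomogeneous n)
    (h : f' - u * f ∈ Ideal.span (X '' s)) :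
    f' - C (coeff 0 u) * f ∈ Ideal.span (X '' s) := by
  have hu : (DirectSum.decompose (homogeneousSubmodule σ R) u 0 : MvPolynomial σ R) =
      C (coeff 0 u) :=
    (decomposition.decompose'_apply u 0).trans (homogeneousComponent_zero u)
  rw [← hu]
  exact sub_decompose_zero_mul_mem (isHomogeneous_span_X_image s) hf hf' h

variable [IsDomain R]

lemma isTorsionFree_quotient_span_X_image (s : Set σ) :
    Module.IsTorsionFree R (MvPolynomial σ R ⧸ Ideal.span (X '' s : Set (MvPolynomial σ R))) := by
  refine Module.isTorsionFree_iff_smul_eq_zero.2 fun r q hrq ↦ or_iff_not_imp_left.2 fun hr ↦ ?_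
  obtain ⟨p, rfl⟩ := Ideal.Quotient.mk_surjective q
  have hrp : r • p ∈ Ideal.span (X '' s) := Ideal.Quotient.eq_zero_iff_mem.1 hrq
  have hsupp : (r • p).support = p.support := support_smul_eq hr p
  rwa [mem_ideal_span_X_image, hsupp, ← mem_ideal_span_X_image, ← Ideal.Quotient.eq_zero_iff_mem]
    at hrp

variable {i j : σ} {n : ℕ} {f g f' g' : MvPolynomial σ R}

lemma doubleLineIdeal_X_le_iff (hij : i ≠ j) (hf : f.IsHomogeneous n) (hg : g.IsHomogeneous n)
    (hf' : f'.IsHomogeneous n) (hg' : g'.IsHomogeneous n) :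
    doubleLineIdeal (X i) (X j) f' g' ≤ doubleLineIdeal (X i) (X j) f g ↔
      ∃ c : R, f' - C c * f ∈ Ideal.span {X i, X j} ∧ g' - C c * g ∈ Ideal.span {X i, X j} := by
  have hX (c : MvPolynomial σ R) (hc : X i ∣ X j * c) : X i ∣ c :=
    (X_dvd_mul_iff.1 hc).resolve_left (by simpa using hij)
  rw [doubleLineIdeal_le_iff isRegular_X.left hX, ← Set.image_pair]
  exact ⟨fun ⟨u, hfu, hgu⟩ ↦ ⟨coeff 0 u, sub_C_coeff_zero_mul_mem_span_X_image hf hf' hfu,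
    sub_C_coeff_zero_mul_mem_span_X_image hg hg' hgu⟩, fun ⟨c, hc⟩ ↦ ⟨C c, hc⟩⟩

theorem stmt_2_general (hij : i ≠ j) (hf : f.IsHomogeneous n) (hg : g.IsHomogeneous n)
    (hf' : f'.IsHomogeneous n) (hg' : g'.IsHomogeneous n) :
    doubleLineIdeal (X i) (X j) f g = doubleLineIdeal (X i) (X j) f' g' ↔
      ∃ c : R, IsUnit c ∧ f' - C c * f ∈ Ideal.span {X i, X j} ∧
        g' - C c * g ∈ Ideal.span {X i, X j} := by
  let I : Ideal (MvPolynomial σ R) := Ideal.span {X i, X j}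
  have hI : I = Ideal.span (X '' {i, j}) := by rw [Set.image_pair]
  let π := Ideal.Quotient.mk I
  have : Module.IsTorsionFree R (MvPolynomial σ R ⧸ I) :=
    hI ▸ isTorsionFree_quotient_span_X_image {i, j}
  have smul_eq_iff (c : R) (p q p' q' : MvPolynomial σ R) :
      c • (π p, π q) = (π p', π q') ↔ p' - C c * p ∈ I ∧ q' - C c * q ∈ I := by
    simp only [π, Prod.smul_mk, Prod.mk.injEq, smul_quotient_mk_eq_iff, smul_eq_C_mul]
  calc
    _ ↔ R ∙ (π f, π g) = R ∙ (π f', π g') := by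
      rw [le_antisymm_iff, le_antisymm_iff, doubleLineIdeal_X_le_iff hij hf' hg' hf hg,
        doubleLineIdeal_X_le_iff hij hf hg hf' hg']
      simp only [Submodule.span_singleton_le_iff_mem, Submodule.mem_span_singleton, smul_eq_iff, I]
    _ ↔ ∃ c : Rˣ, c • (π f, π g) = (π f', π g') := Submodule.span_singleton_eq_span_singleton
    _ ↔ _ := by simp only [IsUnit, exists_exists_eq_and, Units.smul_def, smul_eq_iff, I]

end Polynomial

/-- two pairs `(f,g)` and `(f′,g′)` of homogeneous polynomials of degree
`a+1`, each with no common zeros along `Y`, define the same double line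
`(x², xy, y², xg − yf)` iff they agree up to a nonzero scalar modulo `(x,y)`. -/
theorem stmt_2 {k : Type*} [Field k] [IsAlgClosed k] (a : ℤ) (ha : -1 ≤ a)
    (f g f' g' : MvPolynomial (Fin 4) k)
    (hf : f.IsHomogeneous (a + 1).toNat) (hg : g.IsHomogeneous (a + 1).toNat)
    (hf' : f'.IsHomogeneous (a + 1).toNat) (hg' : g'.IsHomogeneous (a + 1).toNat)
    (hfg : NoCommonZerosAlongY f g) (hfg' : NoCommonZerosAlongY f' g') :
    (Ideal.span {X 0 ^ 2, X 0 * X 1, X 1 ^ 2, X 0 * g - X 1 * f} : Ideal (MvPolynomial (Fin 4) k))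
        = Ideal.span {X 0 ^ 2, X 0 * X 1, X 1 ^ 2, X 0 * g' - X 1 * f'} ↔
      ∃ c : k, c ≠ 0 ∧ f' - C c * f ∈ (Ideal.span {X 0, X 1} : Ideal (MvPolynomial (Fin 4) k)) ∧
        g' - C c * g ∈ (Ideal.span {X 0, X 1} : Ideal (MvPolynomial (Fin 4) k)) := by
  simp only [← isUnit_iff_ne_zero]
  exact stmt_2_general (i := 0) (j := 1) zero_ne_one hf hg hf' hg'
end

section
/- Let a ≥ -1 be an integer and let f, g ∈ S be homogeneous polynomials of degree a+1 with no common zeros along Y. Then the module of syzygies of the four generators x², xy, y², xg−yf of the ideal I_Z = (x², xy, y², xg − yf) is generated by the four relations (y, −x, 0, 0), (0, y, −x, 0), (−g, f, 0, x), (0, −g, f, y): that is, every (A,B,C,D) ∈ S⁴ with A·x² + B·xy + C·y² + D·(xg − yf) = 0 is an S-linear combination of these four quadruples. -/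
open MvPolynomial

/-!
Sort a syzygy as `x (Ax + By + Dg) = y (Df - Cy)`. Since `x, y` is a regular sequence, both sides
are multiples of `xy`, so `Df` and `Dg` lie in `(x, y)`. This ideal is prime and does not contain
both `f` and `g`, hence `D = s₃ x + s₄ y`. Subtracting `s₃` times the third relation and `s₄` times
the fourth leaves a syzygy of `x², xy, y²`, and these come from the first two relations by using
regularity of `x, y` twice.
-/

section RegularPair

open RingTheory.Sequence

variable {R : Type*} [CommRing R] {x y : R}

theorem isWeaklyRegular_pair_iff :
    IsWeaklyRegular R [x, y] ↔ IsSMulRegular R x ∧ ∀ p, x ∣ y * p → x ∣ p := by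
  rw [isWeaklyRegular_cons_iff, isWeaklyRegular_singleton_iff,
    isSMulRegular_quotient_iff_mem_of_smul_mem]
  simp only [Submodule.mem_smul_pointwise_iff_exists, Submodule.mem_top, true_and, smul_eq_mul,
    dvd_def, eq_comm]

theorem isWeaklyRegular_pair_of_prime [IsDomain R] (hx : Prime x) (hxy : ¬ x ∣ y) :
    IsWeaklyRegular R [x, y] :=
  isWeaklyRegular_pair_iff.mpr
    ⟨IsSMulRegular.of_ne_zero hx.ne_zero, fun _ h ↦ (hx.dvd_or_dvd h).resolve_left hxy⟩

theorem exists_eq_mul_of_isWeaklyRegular_pair (hxy : IsWeaklyRegular R [x, y]) {p q : R}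
    (h : x * p = y * q) : ∃ t, p = y * t ∧ q = x * t := by
  obtain ⟨hx, hy⟩ := isWeaklyRegular_pair_iff.mp hxy
  obtain ⟨t, rfl⟩ := hy q ⟨p, h.symm⟩
  exact ⟨t, hx (by simpa only [smul_eq_mul, mul_left_comm] using h), rfl⟩

theorem exists_combination_of_sq_mul_sq_syzygy (hxy : IsWeaklyRegular R [x, y]) {A B C : R}
    (h : A * x ^ 2 + B * (x * y) + C * y ^ 2 = 0) :
    ∃ s₁ s₂, A = s₁ * y ∧ B = -(s₁ * x) + s₂ * y ∧ C = -(s₂ * x) := by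
  obtain ⟨t, ht, hCt⟩ := exists_eq_mul_of_isWeaklyRegular_pair hxy
    (show x * (A * x + B * y) = y * -(C * y) by linear_combination h)
  obtain ⟨s₂, hts₂, hCs₂⟩ := exists_eq_mul_of_isWeaklyRegular_pair hxy
    (show x * t = y * -C by linear_combination -hCt)
  obtain ⟨s₁, hAs₁, hBs₁⟩ := exists_eq_mul_of_isWeaklyRegular_pair hxy
    (show x * A = y * (t - B) by linear_combination ht)
  exact ⟨s₁, s₂, by linear_combination hAs₁, by linear_combination hts₂ - hBs₁,
    by linear_combination -hCs₂⟩

theorem mem_colon_span_pair_of_syzygy (hxy : IsWeaklyRegular R [x, y]) {f g A B C D : R}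
    (h : A * x ^ 2 + B * (x * y) + C * y ^ 2 + D * (x * g - y * f) = 0) :
    D ∈ (Ideal.span {x, y}).colon {f, g} := by
  obtain ⟨t, hg, hf⟩ := exists_eq_mul_of_isWeaklyRegular_pair hxy
    (show x * (A * x + B * y + D * g) = y * (D * f - C * y) by linear_combination h)
  have hDf : D * f ∈ Ideal.span {x, y} :=
    Ideal.mem_span_pair.mpr ⟨t, C, by linear_combination -hf⟩
  have hDg : D * g ∈ Ideal.span {x, y} :=
    Ideal.mem_span_pair.mpr ⟨-A, t - B, by linear_combination -hg⟩
  simpa [Submodule.mem_colon] using ⟨hDf, hDg⟩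

theorem stmt_7_general {f g : R} (hxy : IsWeaklyRegular R [x, y])
    (hfg : (Ideal.span {x, y}).colon {f, g} ≤ Ideal.span {x, y}) {A B C D : R}
    (h : A * x ^ 2 + B * (x * y) + C * y ^ 2 + D * (x * g - y * f) = 0) :
    ∃ s₁ s₂ s₃ s₄ : R,
      A = s₁ * y - s₃ * g ∧
      B = -(s₁ * x) + s₂ * y + s₃ * f - s₄ * g ∧
      C = -(s₂ * x) + s₄ * f ∧
      D = s₃ * x + s₄ * y := by
  obtain ⟨s₃, s₄, hD⟩ := Ideal.mem_span_pair.mp (hfg (mem_colon_span_pair_of_syzygy hxy h))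
  obtain ⟨s₁, s₂, hA, hB, hC⟩ := exists_combination_of_sq_mul_sq_syzygy hxy
    (show (A + s₃ * g) * x ^ 2 + (B - s₃ * f + s₄ * g) * (x * y) + (C - s₄ * f) * y ^ 2 = 0 by
      linear_combination h + (x * g - y * f) * hD)
  exact ⟨s₁, s₂, s₃, s₄, by linear_combination hA, by linear_combination hB,
    by linear_combination hC, hD.symm⟩

end RegularPair

theorem colon_le_of_isPrime {R : Type*} [CommRing R] {P : Ideal R} (hP : P.IsPrime) {S : Set R}
    (hS : ¬ S ⊆ P) : P.colon S ≤ P := by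
  obtain ⟨s, hs, hsP⟩ := Set.not_subset.mp hS
  exact fun r hr ↦ (hP.mem_or_mem (Submodule.mem_colon.mp hr s hs)).resolve_right hsP

section Variables

variable {σ R : Type*} [CommRing R]

theorem isWeaklyRegular_X_pair [IsDomain R] {i j : σ} (hij : i ≠ j) :
    RingTheory.Sequence.IsWeaklyRegular (MvPolynomial σ R) [X (R := R) i, X j] :=
  isWeaklyRegular_pair_of_prime X_prime (X_dvd_X.not.mpr hij)

theorem ker_aeval_indicator_compl_X (s : Set σ) :
    RingHom.ker (aeval (sᶜ.indicator X) : MvPolynomial σ R →ₐ[R] MvPolynomial σ R) =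
      Ideal.span (X '' s) := by
  refine le_antisymm (fun p hp ↦ ?_) ?_
  · let I : Ideal (MvPolynomial σ R) := Ideal.span (X '' s)
    have hcomp : (Ideal.Quotient.mkₐ R I).comp (aeval (sᶜ.indicator X)) =
        Ideal.Quotient.mkₐ R I := by
      ext i
      by_cases hi : i ∈ s
      · have hX : Ideal.Quotient.mk I (X i) = 0 :=
          Ideal.Quotient.eq_zero_iff_mem.mpr (Ideal.subset_span (Set.mem_image_of_mem X hi))
        simp [hi, hX]
      · simp [hi]
    have hmk := DFunLike.congr_fun hcomp p
    rw [AlgHom.comp_apply, RingHom.mem_ker.mp hp, map_zero] at hmk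
    exact Ideal.Quotient.eq_zero_iff_mem.mp hmk.symm
  · rw [Ideal.span_le]
    rintro _ ⟨i, hi, rfl⟩
    simp [hi]

theorem isPrime_span_X_image [IsDomain R] (s : Set σ) :
    (Ideal.span (X '' s : Set (MvPolynomial σ R))).IsPrime :=
  ker_aeval_indicator_compl_X (R := R) s ▸ RingHom.ker_isPrime _

theorem span_X_image_le_ker_eval {s : Set σ} {v : σ → R} (hv : ∀ i ∈ s, v i = 0) :
    Ideal.span (X '' s) ≤ RingHom.ker (eval v) := by
  rw [Ideal.span_le]
  rintro _ ⟨i, hi, rfl⟩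
  simpa using hv i hi

end Variables

theorem NoCommonZerosAlongY.colon_span_X_le {k : Type*} [Field k] {f g : MvPolynomial (Fin 4) k}
    (hfg : NoCommonZerosAlongY f g) :
    (Ideal.span {X 0, X 1}).colon {f, g} ≤ Ideal.span {X 0, X 1} := by
  rw [← Set.image_pair]
  refine colon_le_of_isPrime (isPrime_span_X_image _) fun hsub ↦ ?_
  have hker := span_X_image_le_ker_eval (s := {0, 1}) (v := ![0, 0, (1 : k), 0]) (by simp)
  have hf : eval ![0, 0, 1, 0] f = 0 := hker (hsub (Set.mem_insert f _))
  have hg : eval ![0, 0, 1, 0] g = 0 := hker (hsub (Set.mem_insert_of_mem f rfl))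
  exact (hfg 1 0 (by simp)).elim (· hf) (· hg)

/-- the syzygies of the four generators `x², xy, y², xg − yf` of `I_Z`
are generated by the four Koszul-type relations
`(y, −x, 0, 0)`, `(0, y, −x, 0)`, `(−g, f, 0, x)`, `(0, −g, f, y)`. -/
theorem stmt_7 {k : Type*} [Field k] [IsAlgClosed k] (a : ℤ) (ha : -1 ≤ a)
    (f g : MvPolynomial (Fin 4) k)
    (hf : f.IsHomogeneous (a + 1).toNat) (hg : g.IsHomogeneous (a + 1).toNat)
    (hfg : NoCommonZerosAlongY f g) :
    ∀ A B C D : MvPolynomial (Fin 4) k,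
      A * X 0 ^ 2 + B * (X 0 * X 1) + C * X 1 ^ 2 + D * (X 0 * g - X 1 * f) = 0 →
      ∃ s₁ s₂ s₃ s₄ : MvPolynomial (Fin 4) k,
        A = s₁ * X 1 - s₃ * g ∧
        B = -(s₁ * X 0) + s₂ * X 1 + s₃ * f - s₄ * g ∧
        C = -(s₂ * X 0) + s₄ * f ∧
        D = s₃ * X 0 + s₄ * X 1 :=
  fun _ _ _ _ ↦ stmt_7_general (isWeaklyRegular_X_pair (by decide)) hfg.colon_span_X_le
end

section
/- Let k be an algebraically closed field, R = k[z,w], and a ≥ 0 an integer. Let f, g ∈ R be homogeneous of degree a+1 with no common zeros on k² ∖ {(0,0)}. Then every homogeneous q ∈ R of degree d ≥ 3a+2 can be written q = α·f² + β·fg + γ·g² with α, β, γ ∈ R homogeneous of degree d − 2a − 2. (The map R(−2a−2)³ → R given by (f², fg, g²) is surjective in all degrees ≥ 3(a+1) − 1.) -/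
open MvPolynomial

/-!
Binary forms of degree `n` are the homogenizations of univariate polynomials of degree at most `n`.
If `f` and `g` have no common zeros, their dehomogenizations `F` and `G` are coprime, and the zero
at infinity `(1 : 0)` being excluded, one of them, say `F`, has the full degree `deg f`. Reducing
the coefficient of `G` in a Bézout relation `Q = U F + V G` modulo `F` keeps all degrees under
control, so every form of degree at least `deg f + deg g - 1` lies in the ideal `(f, g)`.
Expanding `q = u f + v g` and then `u` and `v` in the same way gives the result for `(f, g)²`.
-/

section Univariate

open Polynomial

variable {k : Type*} [Field k] {F G : k[X]}

lemma exists_degree_lt_mul_add_mul_eq (hFG : IsCoprime F G) (hF : F ≠ 0) (Q : k[X]) :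
    ∃ U V : k[X], V.degree < F.degree ∧ U * F + V * G = Q := by
  obtain ⟨A, B, hAB⟩ := hFG
  refine ⟨Q * A + Q * B / F * G, Q * B % F, EuclideanDomain.mod_lt _ hF, ?_⟩
  linear_combination Q * hAB + G * EuclideanDomain.div_add_mod (Q * B) F

lemma exists_natDegree_le_mul_add_mul_eq {m n i j d : ℕ} (hFG : IsCoprime F G)
    (hF : F.natDegree ≤ m) (hFm : F.coeff m ≠ 0) (hG : G.natDegree ≤ n)
    (hi : i + m = d) (hj : j + n = d) (hd : m + n ≤ d + 1) {Q : k[X]} (hQ : Q.natDegree ≤ d) :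
    ∃ U V : k[X], U.natDegree ≤ i ∧ V.natDegree ≤ j ∧ U * F + V * G = Q := by
  have hF0 : F ≠ 0 := by rintro rfl; simp at hFm
  have hdeg : F.degree = m :=
    degree_eq_of_le_of_coeff_ne_zero (natDegree_le_iff_degree_le.1 hF) hFm
  obtain ⟨U, V, hVF, hUV⟩ := exists_degree_lt_mul_add_mul_eq hFG hF0 Q
  have hV : V.natDegree ≤ j := by
    refine natDegree_le_iff_coeff_eq_zero.2 fun l hl ↦ coeff_eq_zero_of_degree_lt ?_
    exact (hVF.trans_eq hdeg).trans_le (by exact_mod_cast (by omega : m ≤ l))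
  have hUF : (U * F).natDegree ≤ d := by
    rw [eq_sub_of_add_eq hUV]
    exact natDegree_sub_le_of_le hQ (natDegree_mul_le_of_le hV hG) |>.trans (by omega)
  refine ⟨U, V, ?_, hV, hUV⟩
  obtain rfl | hU := eq_or_ne U 0
  · simp
  · rw [natDegree_mul hU hF0, natDegree_eq_of_degree_eq_some hdeg] at hUF
    omega

end Univariate

section BinaryForms

variable {R : Type*} [CommSemiring R] {n : ℕ}

lemma exists_homogenize_eq {f : MvPolynomial (Fin 2) R} (hf : f.IsHomogeneous n) :
    ∃ F : Polynomial R, F.natDegree ≤ n ∧ F.homogenize n = f := by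
  refine ⟨aeval ![Polynomial.X, 1] f, ?_, Polynomial.homogenize_eq_of_isHomogeneous hf rfl⟩
  simpa using aeval_natDegree_le f hf.totalDegree_le ![Polynomial.X, 1] (n := 1)
    (by simp [Fin.forall_fin_two, Polynomial.natDegree_X_le])

lemma aeval_one_zero_homogenize {A : Type*} [CommSemiring A] [Algebra R A] (F : Polynomial R) :
    aeval ![(1 : A), 0] (F.homogenize n) = algebraMap R A (F.coeff n) := by
  rw [Polynomial.homogenize, map_sum, Finset.sum_eq_single (n, 0)]
  · simp [aeval_monomial, Finsupp.prod_fintype]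
  · rintro ⟨i, j⟩ hij hne
    have hj : j ≠ 0 := by aesop
    simp [aeval_monomial, Finsupp.prod_fintype, hj]
  · simp

end BinaryForms

section NoCommonZeros

variable {k K : Type*} [Field k] [Field K] [IsAlgClosed K] [Algebra k K] {m n : ℕ}

lemma isCoprime_of_aeval_homogenize_ne_zero {F G : Polynomial k}
    (hF : F.natDegree ≤ m) (hG : G.natDegree ≤ n)
    (hFG : ∀ c : K, aeval ![c, 1] (F.homogenize m) ≠ 0 ∨ aeval ![c, 1] (G.homogenize n) ≠ 0) :
    IsCoprime F G := by
  rw [Polynomial.isCoprime_iff_aeval_ne_zero_of_isAlgClosed k K]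
  simpa [Polynomial.aeval_homogenize_of_eq_one, hF, hG] using hFG

lemma exists_isHomogeneous_mul_add_mul_eq {f g : MvPolynomial (Fin 2) k}
    (hf : f.IsHomogeneous m) (hg : g.IsHomogeneous n)
    (hfg : ∀ c d : K, (c, d) ≠ (0, 0) → aeval ![c, d] f ≠ 0 ∨ aeval ![c, d] g ≠ 0)
    {i j d : ℕ} (hi : i + m = d) (hj : j + n = d) (hd : m + n ≤ d + 1)
    {q : MvPolynomial (Fin 2) k} (hq : q.IsHomogeneous d) :
    ∃ u v : MvPolynomial (Fin 2) k,
      u.IsHomogeneous i ∧ v.IsHomogeneous j ∧ u * f + v * g = q := by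
  obtain ⟨F, hF, rfl⟩ := exists_homogenize_eq hf
  obtain ⟨G, hG, rfl⟩ := exists_homogenize_eq hg
  obtain ⟨Q, hQ, rfl⟩ := exists_homogenize_eq hq
  have hFG : IsCoprime F G :=
    isCoprime_of_aeval_homogenize_ne_zero hF hG fun c : K ↦ hfg c 1 (by simp)
  suffices ∃ U V, U.natDegree ≤ i ∧ V.natDegree ≤ j ∧ U * F + V * G = Q by
    obtain ⟨U, V, hU, hV, rfl⟩ := this
    refine ⟨U.homogenize i, V.homogenize j, Polynomial.isHomogeneous_homogenize U,
      Polynomial.isHomogeneous_homogenize V, ?_⟩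
    rw [Polynomial.homogenize_add, ← Polynomial.homogenize_mul U F hU hF,
      ← Polynomial.homogenize_mul V G hV hG, hi, hj]
  have hcoeff : F.coeff m ≠ 0 ∨ G.coeff n ≠ 0 := by
    simpa [aeval_one_zero_homogenize] using hfg 1 0 (by simp)
  obtain hFm | hGn := hcoeff
  · exact exists_natDegree_le_mul_add_mul_eq hFG hF hFm hG hi hj hd hQ
  · obtain ⟨V, U, hV, hU, hVU⟩ :=
      exists_natDegree_le_mul_add_mul_eq hFG.symm hG hGn hF hj hi (by omega) hQ
    exact ⟨U, V, hU, hV, by rw [add_comm, hVU]⟩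

end NoCommonZeros

theorem stmt_9_general {k K : Type*} [Field k] [Field K] [IsAlgClosed K] [Algebra k K] (a b : ℕ)
    (f g : MvPolynomial (Fin 2) k)
    (hf : f.IsHomogeneous (a + 1)) (hg : g.IsHomogeneous (b + 1))
    (hfg : ∀ c d : K, (c, d) ≠ (0, 0) → aeval ![c, d] f ≠ 0 ∨ aeval ![c, d] g ≠ 0)
    (d : ℕ) (had : 2 * a + b + 2 ≤ d) (hbd : a + 2 * b + 2 ≤ d)
    (q : MvPolynomial (Fin 2) k) (hq : q.IsHomogeneous d) :
    ∃ α β γ : MvPolynomial (Fin 2) k,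
      α.IsHomogeneous (d - (2 * a + 2)) ∧ β.IsHomogeneous (d - (a + b + 2)) ∧
      γ.IsHomogeneous (d - (2 * b + 2)) ∧
      q = α * f ^ 2 + β * (f * g) + γ * g ^ 2 := by
  obtain ⟨u, v, hu, hv, rfl⟩ := exists_isHomogeneous_mul_add_mul_eq hf hg hfg
    (i := d - (a + 1)) (j := d - (b + 1)) (by omega) (by omega) (by omega) hq
  obtain ⟨α, β₁, hα, hβ₁, rfl⟩ := exists_isHomogeneous_mul_add_mul_eq hf hg hfg
    (i := d - (2 * a + 2)) (j := d - (a + b + 2)) (by omega) (by omega) (by omega) hu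
  obtain ⟨β₂, γ, hβ₂, hγ, rfl⟩ := exists_isHomogeneous_mul_add_mul_eq hf hg hfg
    (i := d - (a + b + 2)) (j := d - (2 * b + 2)) (by omega) (by omega) (by omega) hv
  exact ⟨α, β₁ + β₂, γ, hα, hβ₁.add hβ₂, hγ, by ring⟩

/-- in `R = k[z,w]`, if `f, g` are homogeneous of degree `a+1` with no
common zeros on `k² ∖ {(0,0)}`, then every homogeneous `q` of degree `d ≥ 3a+2` can be
written `q = α·f² + β·fg + γ·g²` with `α, β, γ` homogeneous of degree `d − 2a − 2`. -/
theorem stmt_9 {k : Type*} [Field k] [IsAlgClosed k] (a : ℕ)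
    (f g : MvPolynomial (Fin 2) k)
    (hf : f.IsHomogeneous (a + 1)) (hg : g.IsHomogeneous (a + 1))
    (hfg : ∀ c d : k, (c, d) ≠ (0, 0) → eval ![c, d] f ≠ 0 ∨ eval ![c, d] g ≠ 0) :
    ∀ (d : ℕ), 3 * a + 2 ≤ d → ∀ q : MvPolynomial (Fin 2) k, q.IsHomogeneous d →
      ∃ α β γ : MvPolynomial (Fin 2) k,
        α.IsHomogeneous (d - (2 * a + 2)) ∧ β.IsHomogeneous (d - (2 * a + 2)) ∧
        γ.IsHomogeneous (d - (2 * a + 2)) ∧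
        q = α * f ^ 2 + β * (f * g) + γ * g ^ 2 := by
  intro d hd q hq
  simpa only [← two_mul] using
    stmt_9_general a a f g hf hg hfg d (by omega) (by omega) q hq
end

section
/- Let a, b ≥ 0 be integers. Let f, g ∈ S be homogeneous of degree a+1 with no common zeros along Y, let p, q ∈ S be homogeneous of degrees b and 3a+b+2 with no common zeros along Y, and let α, β, γ ∈ S be homogeneous with q ≡ α·f² + β·fg + γ·g² (mod (x,y)). Set I_W = (x³, x²y, xy², y³, x(xg−yf), y(xg−yf), α·x² + β·xy + γ·y² − p(xg−yf)). Then for all sufficiently large n, the k-dimension of the degree-n graded component of S/I_W equals 3n + 3 + 3a + b. (Equivalently, the triple line W of type (a,b) with saturated ideal I_W is a curve of degree 3 and arithmetic genus −2−3a−b.) -/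
open MvPolynomial

/-!
Let `Y` also denote the ideal `(x, y)`, put `l = x g - y f` and `h = α x² + β x y + γ y² - p l`.
Since `x, y` is a regular sequence, the monomials of degree `m` in `x, y` induce a basis of
`Yᵐ / Yᵐ⁺¹` over `k[z, w]`, which gives the Hilbert function of `S / Y³`. As `f`, `g`, `p` do not
vanish identically on the line, `x l, y l, h` induce a basis of `I_W / Y³` over `k[z, w]`, so the
Hilbert function of `S / I_W` is that of `S / Y³` minus the contributions of these generators.

This needs `α, β, γ` of degree `a + b`, so that `h` is homogeneous. By the congruence for `q`, their
restrictions to the line may be replaced by their components of degree `a + b`: as `f` and `g` are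
coprime on the line, the difference is a combination of Koszul syzygies of `(f², f g, g²)`, which
changes `h` by an element of `(x l, y l) + Y³`.
-/

namespace TripleLine

attribute [local instance] MvPolynomial.gradedAlgebra

section LinearAlgebra

variable {K V W W' : Type*} [Field K] [AddCommGroup V] [Module K V] [AddCommGroup W] [Module K W]
  [AddCommGroup W'] [Module K W']

theorem finrank_map_add_finrank_inf_ker (f : V →ₗ[K] W) (U : Submodule K V)
    [FiniteDimensional K U] :
    Module.finrank K (U.map f) + Module.finrank K ↥(U ⊓ LinearMap.ker f) = Module.finrank K U := by
  rw [← LinearMap.range_domRestrict, ← Submodule.map_comap_subtype,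
    Submodule.finrank_map_subtype_eq, ← LinearMap.ker_domRestrict]
  exact (f.domRestrict U).finrank_range_add_finrank_ker

theorem finrank_map_add_finrank_map_inf_ker {f : V →ₗ[K] W} {g : V →ₗ[K] W'}
    (hgf : LinearMap.ker g ≤ LinearMap.ker f) (U : Submodule K V) [FiniteDimensional K U] :
    Module.finrank K (U.map f) + Module.finrank K ((U ⊓ LinearMap.ker f).map g)
      = Module.finrank K (U.map g) := by
  have : FiniteDimensional K ↥(U ⊓ LinearMap.ker f) :=
    Submodule.finiteDimensional_of_le inf_le_left
  have hf := finrank_map_add_finrank_inf_ker f U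
  have hg := finrank_map_add_finrank_inf_ker g U
  have hfg := finrank_map_add_finrank_inf_ker g (U ⊓ LinearMap.ker f)
  rw [inf_assoc, inf_eq_right.2 hgf] at hfg
  omega

end LinearAlgebra

section HomogeneousPolynomials

variable {σ R : Type*}

theorem finrank_homogeneousSubmodule [Fintype σ] [CommRing R] [StrongRankCondition R] (n : ℕ) :
    Module.finrank R (homogeneousSubmodule σ R n) = (Fintype.card σ).multichoose n := by
  classical
  have hcard : Nat.card {d : σ →₀ ℕ | d.degree = n} = (Fintype.card σ).multichoose n := by
    rw [← Finset.card_univ, ← Finset.card_finsuppAntidiag_nat_eq_multichoose,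
      ← Nat.card_eq_finsetCard]
    exact Nat.card_congr (Equiv.subtypeEquivRight fun d => by
      simp [Finset.mem_finsuppAntidiag, Finsupp.degree_eq_sum])
  rw [homogeneousSubmodule_eq_finsupp_supported,
    (AddMonoidAlgebra.supportedEquivFinsupp _).finrank_eq,
    Module.finrank_eq_nat_card_basis Finsupp.basisSingleOne, hcard]

theorem homogeneousComponent_mul_of_isHomogeneous_right [CommSemiring R] {n d : ℕ}
    (F : MvPolynomial σ R) {G : MvPolynomial σ R} (hG : G.IsHomogeneous d) (h : d ≤ n) :
    homogeneousComponent n (F * G) = homogeneousComponent (n - d) F * G := by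
  have := DirectSum.coe_decompose_mul_of_right_mem_of_le (homogeneousSubmodule σ R) (a := F)
    ((mem_homogeneousSubmodule d G).2 hG) h
  rwa [← decomposition.decompose'_apply, ← decomposition.decompose'_apply]

theorem not_isUnit_of_isHomogeneous [CommRing R] [Nontrivial R] [IsReduced R]
    {F : MvPolynomial σ R} {n : ℕ}
    (hF : F.IsHomogeneous n) (hn : n ≠ 0) : ¬ IsUnit F := fun hu => by
  have h0 : IsUnit (coeff 0 F) := (MvPolynomial.isUnit_iff.1 hu).1
  rw [hF.coeff_eq_zero (by simpa using hn.symm)] at h0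
  exact not_isUnit_zero h0

theorem ne_zero_of_isRelPrime [CommRing R] [IsDomain R] {F G : MvPolynomial σ R} {n : ℕ}
    (h : IsRelPrime F G) (hG : G.IsHomogeneous n) (hn : n ≠ 0) : F ≠ 0 := by
  rintro rfl
  exact not_isUnit_of_isHomogeneous hG hn (isRelPrime_zero_left.1 h)

theorem homogeneousComponent_quadratic [CommSemiring R] {d m : ℕ} {A B C F G : MvPolynomial σ R}
    (hF : F.IsHomogeneous d) (hG : G.IsHomogeneous d)
    (h : (A * F ^ 2 + B * (F * G) + C * G ^ 2).IsHomogeneous (m + 2 * d)) :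
    homogeneousComponent m A * F ^ 2 + homogeneousComponent m B * (F * G)
      + homogeneousComponent m C * G ^ 2 = A * F ^ 2 + B * (F * G) + C * G ^ 2 := by
  have component_mul (P : MvPolynomial σ R) {Q : MvPolynomial σ R}
      (hQ : Q.IsHomogeneous (2 * d)) :
      homogeneousComponent (m + 2 * d) (P * Q) = homogeneousComponent m P * Q := by
    rw [homogeneousComponent_mul_of_isHomogeneous_right P hQ (Nat.le_add_left _ _),
      Nat.add_sub_cancel]
  rw [← homogeneousComponent_eq_self h, map_add, map_add,
    component_mul A (mul_comm d 2 ▸ hF.pow 2), component_mul B (two_mul d ▸ hF.mul hG),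
    component_mul C (mul_comm d 2 ▸ hG.pow 2)]

theorem isRelPrime_X [CommRing R] [IsDomain R] {i j : σ} (hij : i ≠ j) :
    IsRelPrime (X i : MvPolynomial σ R) (X j) := by
  simpa [X_prime.irreducible.isRelPrime_iff_not_dvd, X_dvd_X] using hij

theorem isRelPrime_of_eval_eq_zero_imp [Finite σ] [Nontrivial σ] {k : Type*} [Field k]
    [IsAlgClosed k] {F G : MvPolynomial σ k} (h : ∀ v, eval v F = 0 → eval v G = 0 → v = 0) :
    IsRelPrime F G := by
  have exists_X_pow_mem (i : σ) : ∃ N : ℕ, X i ^ N ∈ Ideal.span {F, G} := by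
    change X i ∈ (Ideal.span {F, G}).radical
    rw [← vanishingIdeal_zeroLocus_eq_radical (K := k), zeroLocus_span]
    intro v hv
    simp [h v (hv F (by simp)) (hv G (by simp))]
  intro d hdF hdG
  have dvd_of_mem {P} (hP : P ∈ Ideal.span {F, G}) : d ∣ P := by
    obtain ⟨u, v, rfl⟩ := Ideal.mem_span_pair.1 hP
    exact dvd_add (hdF.mul_left u) (hdG.mul_left v)
  obtain ⟨i, j, hij⟩ := exists_pair_ne σ
  obtain ⟨N, hN⟩ := exists_X_pow_mem i
  obtain ⟨M, hM⟩ := exists_X_pow_mem j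
  exact (isRelPrime_X hij).pow (dvd_of_mem hN) (dvd_of_mem hM)

end HomogeneousPolynomials

section PairIdeal

variable {A : Type*} [CommRing A]

theorem span_pair_pow (x y : A) (m : ℕ) : Ideal.span {x, y} ^ m
    = Ideal.span (Set.range fun i : Fin (m + 1) => x ^ (i : ℕ) * y ^ (m - i)) := by
  rw [Ideal.span_insert, ← Ideal.add_eq_sup, add_pow, Finset.sum_range, Ideal.sum_eq_sup,
    Finset.sup_univ_eq_iSup, ← Set.iUnion_singleton_eq_range, Ideal.span_iUnion]
  refine iSup_congr fun i => ?_
  rw [natCast_eq_one (Nat.choose_pos i.is_le).ne', mul_one, Ideal.span_singleton_pow,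
    Ideal.span_singleton_pow, Ideal.span_singleton_mul_span_singleton]

theorem exists_koszul_coeffs [IsDomain A] [DecompositionMonoid A] {x y : A} (hx : x ≠ 0)
    (hxy : IsRelPrime x y) : ∀ {m : ℕ} {c : Fin (m + 1) → A},
      ∑ i, c i * (x ^ (i : ℕ) * y ^ (m - i)) = 0 →
      ∃ t : Fin (m + 2) → A, t 0 = 0 ∧ t (Fin.last _) = 0 ∧
        ∀ i : Fin (m + 1), c i = t i.castSucc * y - t i.succ * x
  | 0, c, h => ⟨0, rfl, rfl, Fin.forall_fin_one.2 (by simpa using h)⟩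
  | m + 1, c, h => by
    have hsplit : c 0 * y ^ (m + 1)
        + x * ∑ i : Fin (m + 1), c i.succ * (x ^ (i : ℕ) * y ^ (m - i)) = 0 := by
      rw [Fin.sum_univ_succ] at h
      simpa [pow_succ', mul_assoc, mul_left_comm _ x, Finset.mul_sum] using h
    obtain ⟨u, hu⟩ : x ∣ c 0 := hxy.pow_right.dvd_of_dvd_mul_right
      ((dvd_add_left (dvd_mul_right x _)).1 (hsplit ▸ dvd_zero x))
    have hsum : ∑ i, (Fin.tail c + Pi.single 0 (u * y) : Fin (m + 1) → A) i
        * (x ^ (i : ℕ) * y ^ (m - i)) = 0 := by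
      simp only [Pi.add_apply, add_mul, Finset.sum_add_distrib, Pi.single_apply, ite_mul, zero_mul,
        Finset.sum_ite_eq', Finset.mem_univ, if_true, Fin.tail]
      rw [hu] at hsplit
      refine mul_left_cancel₀ hx ?_
      simp only [Fin.val_zero, Nat.sub_zero]
      linear_combination hsplit
    obtain ⟨t, ht_zero, ht_last, hc⟩ := exists_koszul_coeffs hx hxy hsum
    let t' : Fin (m + 2) → A := t - Pi.single 0 u
    refine ⟨Fin.cons 0 t', rfl, ?_, Fin.cases ?_ fun i => ?_⟩
    · simp [← Fin.succ_last (m + 1), -Fin.succ_last, t', ht_last]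
    · simp [t', hu, ht_zero, mul_comm]
    · change c i.succ = t' i.castSucc * y - t' i.succ * x
      have hci : c i.succ + (Pi.single 0 (u * y) : Fin (m + 1) → A) i
        = t i.castSucc * y - t i.succ * x := hc i
      rcases eq_or_ne i 0 with rfl | hi
      · simp only [Fin.succ_zero_eq_one, Fin.castSucc_zero, Pi.sub_apply, Pi.single_eq_same, ne_eq,
          one_ne_zero, not_false_eq_true, Pi.single_eq_of_ne, sub_zero, t'] at hci ⊢
        linear_combination hci
      · simpa [t', hi] using hci

theorem exists_syzygy [IsDomain A] [DecompositionMonoid A] {x y a b c : A} (hx : x ≠ 0)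
    (hxy : IsRelPrime x y) (h : a * x ^ 2 + b * (x * y) + c * y ^ 2 = 0) :
    ∃ s t, a = s * y ∧ b = t * y - s * x ∧ c = -(t * x) := by
  obtain ⟨t, ht_zero, ht_last, ht⟩ := exists_koszul_coeffs (m := 2) (c := ![c, b, a]) hx hxy (by
    simpa [Fin.sum_univ_three, add_comm, add_left_comm, add_assoc] using h)
  refine ⟨t 2, t 1, ?_, ht 1, ?_⟩
  · simpa [show t 3 = 0 from ht_last] using ht 2
  · simpa [ht_zero] using ht 0

theorem mem_span_pair_of_sum_mem_pow [IsDomain A] [DecompositionMonoid A] {x y : A} (hx : x ≠ 0)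
    (hxy : IsRelPrime x y) {m : ℕ} {c : Fin (m + 1) → A}
    (h : ∑ i, c i * (x ^ (i : ℕ) * y ^ (m - i)) ∈ Ideal.span {x, y} ^ (m + 1)) (i : Fin (m + 1)) :
    c i ∈ Ideal.span {x, y} := by
  rw [pow_succ', span_pair_pow x y m, ← smul_eq_mul,
    Submodule.mem_ideal_smul_span_iff_exists_sum] at h
  obtain ⟨a, ha, hac⟩ := h
  rw [Finsupp.sum_fintype _ _ (by simp)] at hac
  obtain ⟨t, -, -, ht⟩ := exists_koszul_coeffs (c := c - ⇑a) hx hxy (by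
    simp only [Pi.sub_apply, sub_mul, Finset.sum_sub_distrib, sub_eq_zero]
    exact hac.symm)
  rw [← sub_add_cancel (c i) (a i), ← Pi.sub_apply c, ht i]
  exact add_mem (sub_mem (Ideal.mul_mem_left _ _ (Ideal.subset_span (by simp)))
    (Ideal.mul_mem_left _ _ (Ideal.subset_span (by simp)))) (ha i)

end PairIdeal

section Counting

variable {k σ τ ι : Type*} [Field k]

/-- The family `e` in `I` induces a basis of `I / (I ∩ J)` over the polynomial ring in the
variables `τ`, which acts on polynomials in the variables `σ` through the renaming `v`. -/
structure IsBasisMod (v : τ → σ) (J I : Ideal (MvPolynomial σ k)) (e : ι → MvPolynomial σ k)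
    [Fintype ι] : Prop where
  mem : ∀ i, e i ∈ I
  spans : ∀ F ∈ I, ∃ r : ι → MvPolynomial τ k, F - ∑ i, rename v (r i) * e i ∈ J
  indep : ∀ r : ι → MvPolynomial τ k, ∑ i, rename v (r i) * e i ∈ J → r = 0

variable [Fintype ι] {v : τ → σ} {J I : Ideal (MvPolynomial σ k)} {e : ι → MvPolynomial σ k}

theorem IsBasisMod.exists_isHomogeneous (h : IsBasisMod v J I e)
    (hJ : J.IsHomogeneous (homogeneousSubmodule σ k)) {d : ι → ℕ} {n : ℕ}
    (he : ∀ i, (e i).IsHomogeneous (d i)) (hd : ∀ i, d i ≤ n) {F : MvPolynomial σ k} (hF : F ∈ I)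
    (hFn : F.IsHomogeneous n) :
    ∃ r : ∀ i, homogeneousSubmodule τ k (n - d i),
      F - ∑ i, rename v (r i : MvPolynomial τ k) * e i ∈ J := by
  obtain ⟨r, hr⟩ := h.spans F hF
  refine ⟨fun i => ⟨homogeneousComponent (n - d i) (r i), homogeneousComponent_mem _ _⟩, ?_⟩
  have hcomp := homogeneousComponent_mem_of_mem hJ hr n
  rw [map_sub, map_sum, homogeneousComponent_eq_self hFn] at hcomp
  simpa only [homogeneousComponent_mul_of_isHomogeneous_right _ (he _) (hd _),
    ← rename_homogeneousComponent] using hcomp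

theorem IsBasisMod.finrank_map_inf [Fintype τ] (h : IsBasisMod v J I e)
    (hJ : J.IsHomogeneous (homogeneousSubmodule σ k)) {d : ι → ℕ} {n : ℕ}
    (he : ∀ i, (e i).IsHomogeneous (d i)) (hd : ∀ i, d i ≤ n) :
    Module.finrank k ((homogeneousSubmodule σ k n ⊓ I.restrictScalars k).map
      (Ideal.Quotient.mkₐ k J).toLinearMap) = ∑ i, (Fintype.card τ).multichoose (n - d i) := by
  let T : (∀ i, homogeneousSubmodule τ k (n - d i)) →ₗ[k] MvPolynomial σ k :=
    ∑ i, LinearMap.mulRight k (e i) ∘ₗ (rename v).toLinearMap ∘ₗ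
      Submodule.subtype _ ∘ₗ LinearMap.proj i
  have hT r : T r = ∑ i, rename v (r i : MvPolynomial τ k) * e i := by simp [T]
  let L := (Ideal.Quotient.mkₐ k J).toLinearMap ∘ₗ T
  have hL_inj : Function.Injective L := by
    refine (injective_iff_map_eq_zero L).2 fun r hr => ?_
    have hr0 := h.indep _ (hT r ▸ Ideal.Quotient.eq_zero_iff_mem.1 hr)
    exact funext fun i => Subtype.ext (congrFun hr0 i)
  have hL_range : LinearMap.range L = (homogeneousSubmodule σ k n ⊓ I.restrictScalars k).map
      (Ideal.Quotient.mkₐ k J).toLinearMap := by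
    refine le_antisymm ?_ ?_
    · rintro _ ⟨r, rfl⟩
      refine ⟨T r, ⟨?_, ?_⟩, rfl⟩ <;> rw [hT]
      · refine sum_mem fun i _ => ?_
        have hre := (r i).2.rename_isHomogeneous (f := v).mul (he i)
        rwa [Nat.sub_add_cancel (hd i)] at hre
      · exact sum_mem fun i _ => I.mul_mem_left _ (h.mem i)
    · rintro _ ⟨F, ⟨hFn, hF⟩, rfl⟩
      obtain ⟨r, hr⟩ := h.exists_isHomogeneous hJ he hd hF hFn
      exact ⟨r, (Ideal.Quotient.eq.2 (hT r ▸ hr)).symm⟩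
  have (i : ι) : Module.Finite k (homogeneousSubmodule τ k (n - d i)) :=
    Module.Finite.iff_fg.2 (homogeneousSubmodule_fg τ k _)
  rw [← hL_range, LinearMap.finrank_range_of_inj hL_inj, Module.finrank_pi_fintype]
  simp only [finrank_homogeneousSubmodule]

theorem IsBasisMod.gradedPieceDim_add_sum {v : Fin 2 → Fin 4} {J I : Ideal (MvPolynomial (Fin 4) k)}
    {e : ι → MvPolynomial (Fin 4) k} (h : IsBasisMod v J I e) (hJI : J ≤ I)
    (hJ : J.IsHomogeneous (homogeneousSubmodule (Fin 4) k)) {d : ι → ℕ} {n : ℕ}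
    (he : ∀ i, (e i).IsHomogeneous (d i)) (hd : ∀ i, d i ≤ n) :
    gradedPieceDim k I n + ∑ i, (n - d i + 1) = gradedPieceDim k J n := by
  have ker_mk (I : Ideal (MvPolynomial (Fin 4) k)) :
      LinearMap.ker (Ideal.Quotient.mkₐ k I).toLinearMap = I.restrictScalars k :=
    Submodule.ext fun _ => Ideal.Quotient.eq_zero_iff_mem
  have : FiniteDimensional k (homogeneousSubmodule (Fin 4) k n) :=
    Module.Finite.iff_fg.2 (homogeneousSubmodule_fg (Fin 4) k n)
  have hdim := finrank_map_add_finrank_map_inf_ker (f := (Ideal.Quotient.mkₐ k I).toLinearMap)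
    (g := (Ideal.Quotient.mkₐ k J).toLinearMap) (by rw [ker_mk, ker_mk]; exact hJI)
    (homogeneousSubmodule (Fin 4) k n)
  rw [ker_mk, h.finrank_map_inf hJ he hd] at hdim
  simpa only [gradedPieceDim, Fintype.card_fin, Nat.multichoose_two] using hdim

end Counting

section Line

variable {k : Type*} [Field k]

/-- The ideal of the line `Y = {x = y = 0}`. -/
noncomputable def lineIdeal (k : Type*) [Field k] : Ideal (MvPolynomial (Fin 4) k) :=
  Ideal.span {X 0, X 1}

/-- Restriction of a polynomial to the line `Y`, whose coordinates `z, w` become `X 0, X 1`. -/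
noncomputable def restrict : MvPolynomial (Fin 4) k →ₐ[k] MvPolynomial (Fin 2) k :=
  aeval ![0, 0, X 0, X 1]

/-- The inclusion of `k[z, w]` in `k[x, y, z, w]`, a section of `restrict`. -/
noncomputable abbrev extend : MvPolynomial (Fin 2) k →ₐ[k] MvPolynomial (Fin 4) k :=
  rename ![2, 3]

theorem restrict_extend (r : MvPolynomial (Fin 2) k) : restrict (extend r) = r := by
  have h : restrict.comp extend = AlgHom.id k (MvPolynomial (Fin 2) k) := by
    ext i
    fin_cases i <;> simp [restrict]
  exact DFunLike.congr_fun h r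

theorem isHomogeneous_restrict {F : MvPolynomial (Fin 4) k} {n : ℕ} (hF : F.IsHomogeneous n) :
    (restrict F).IsHomogeneous n := by
  simpa only [one_mul] using! hF.aeval (S := k) (n := 1) ![0, 0, X 0, X 1] (by
    simp [Fin.forall_fin_succ, isHomogeneous_zero, isHomogeneous_X])

theorem eval_restrict (F : MvPolynomial (Fin 4) k) (v : Fin 2 → k) :
    eval v (restrict F) = eval ![0, 0, v 0, v 1] F := by
  have h : (aeval v : _ →ₐ[k] k).comp restrict = aeval ![0, 0, v 0, v 1] := by
    ext i
    fin_cases i <;> simp [restrict]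
  exact DFunLike.congr_fun h F

theorem X_zero_mem_lineIdeal : X 0 ∈ lineIdeal k := Ideal.subset_span (by simp)

theorem X_one_mem_lineIdeal : X 1 ∈ lineIdeal k := Ideal.subset_span (by simp)

theorem sub_extend_restrict_mem (F : MvPolynomial (Fin 4) k) :
    F - extend (restrict F) ∈ lineIdeal k := by
  have h : Ideal.Quotient.mkₐ k (lineIdeal k)
      = (Ideal.Quotient.mkₐ k (lineIdeal k)).comp (extend.comp restrict) := by
    ext i
    fin_cases i
    · simpa [restrict] using Ideal.Quotient.eq_zero_iff_mem.2 X_zero_mem_lineIdeal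
    · simpa [restrict] using Ideal.Quotient.eq_zero_iff_mem.2 X_one_mem_lineIdeal
    · simp [restrict]
    · simp [restrict]
  exact Ideal.Quotient.eq.1 (DFunLike.congr_fun h F)

theorem restrict_eq_zero_iff {F : MvPolynomial (Fin 4) k} :
    restrict F = 0 ↔ F ∈ lineIdeal k := by
  refine ⟨fun h => by simpa [h] using sub_extend_restrict_mem F, fun h => ?_⟩
  obtain ⟨A, B, rfl⟩ := Ideal.mem_span_pair.1 h
  simp [restrict]

theorem isRelPrime_restrict [IsAlgClosed k] {F G : MvPolynomial (Fin 4) k}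
    (h : NoCommonZerosAlongY F G) : IsRelPrime (restrict F) (restrict G) := by
  refine isRelPrime_of_eval_eq_zero_imp fun v hF hG => ?_
  rw [eval_restrict] at hF hG
  by_contra hv
  refine (h (v 0) (v 1) fun h0 => hv ?_).elim (· hF) (· hG)
  rw [Prod.mk.injEq] at h0
  exact funext (Fin.forall_fin_two.2 h0)

theorem mem_lineIdeal_of_sum_mem_pow {m : ℕ} {c : Fin (m + 1) → MvPolynomial (Fin 4) k}
    (h : ∑ i, c i * (X 0 ^ (i : ℕ) * X 1 ^ (m - i)) ∈ lineIdeal k ^ (m + 1)) (i : Fin (m + 1)) :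
    c i ∈ lineIdeal k :=
  mem_span_pair_of_sum_mem_pow (X_ne_zero 0) (isRelPrime_X (by decide)) h i

theorem isHomogeneous_X_pow_mul_X_pow (i j : ℕ) :
    (X 0 ^ i * X 1 ^ j : MvPolynomial (Fin 4) k).IsHomogeneous (i + j) :=
  (isHomogeneous_X_pow 0 i).mul (isHomogeneous_X_pow 1 j)

theorem isHomogeneous_lineIdeal_pow (m : ℕ) :
    (lineIdeal k ^ m).IsHomogeneous (homogeneousSubmodule (Fin 4) k) := by
  rw [lineIdeal, span_pair_pow]
  refine Ideal.homogeneous_span _ _ ?_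
  rintro _ ⟨i, rfl⟩
  exact ⟨_, isHomogeneous_X_pow_mul_X_pow _ _⟩

theorem X_pow_mul_X_pow_mem {m : ℕ} (i : Fin (m + 1)) :
    X 0 ^ (i : ℕ) * X 1 ^ (m - i) ∈ lineIdeal k ^ m := by
  rw [lineIdeal, span_pair_pow]
  exact Ideal.subset_span ⟨i, rfl⟩

theorem isBasisMod_lineIdeal_pow (m : ℕ) :
    IsBasisMod ![2, 3] (lineIdeal k ^ (m + 1)) (lineIdeal k ^ m)
      fun i : Fin (m + 1) => X 0 ^ (i : ℕ) * X 1 ^ (m - i) where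
  mem := X_pow_mul_X_pow_mem
  spans F hF := by
    rw [lineIdeal, span_pair_pow, Ideal.mem_span_range_iff_exists_fun] at hF
    obtain ⟨c, rfl⟩ := hF
    refine ⟨fun i => restrict (c i), ?_⟩
    simp only [← Finset.sum_sub_distrib, ← sub_mul, pow_succ' (lineIdeal k)]
    exact sum_mem fun i _ =>
      Ideal.mul_mem_mul (sub_extend_restrict_mem (c i)) (X_pow_mul_X_pow_mem i)
  indep r hr := by
    ext1 i
    rw [← restrict_extend (r i), restrict_eq_zero_iff.2 (mem_lineIdeal_of_sum_mem_pow hr i),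
      Pi.zero_apply]

theorem gradedPieceDim_lineIdeal_pow {n : ℕ} :
    ∀ {m : ℕ}, m ≤ n + 1 →
      gradedPieceDim k (lineIdeal k ^ m) n = ∑ j ∈ Finset.range m, (j + 1) * (n - j + 1)
  | 0, _ => by
    have : Subsingleton (MvPolynomial (Fin 4) k ⧸ lineIdeal k ^ 0) :=
      Ideal.Quotient.subsingleton_iff.2 (by simp)
    simp [gradedPieceDim, Module.finrank_zero_of_subsingleton]
  | m + 1, hm => by
    rw [Finset.sum_range_succ, ← gradedPieceDim_lineIdeal_pow (by lia),
      ← (isBasisMod_lineIdeal_pow m).gradedPieceDim_add_sum (Ideal.pow_le_pow_right m.le_succ)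
        (isHomogeneous_lineIdeal_pow _) (d := fun _ => m) (fun i => ?_) fun _ => by lia]
    · simp
    · simpa only [Nat.add_sub_cancel' i.is_le] using isHomogeneous_X_pow_mul_X_pow i (m - i)

end Line

section TripleLineIdeal

variable {k : Type*} [Field k]

/-- The equation `x g - y f`, which cuts out modulo `(x, y)²` a double structure on `Y`. -/
noncomputable def doubleLineEq (f g : MvPolynomial (Fin 4) k) : MvPolynomial (Fin 4) k :=
  X 0 * g - X 1 * f

/-- The equation `α x² + β x y + γ y² - p (x g - y f)` of the triple line. -/
noncomputable def tripleLineEq (f g p α β γ : MvPolynomial (Fin 4) k) : MvPolynomial (Fin 4) k :=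
  α * X 0 ^ 2 + β * (X 0 * X 1) + γ * X 1 ^ 2 - p * doubleLineEq f g

/-- The ideal `I_W` of the triple line `W`. -/
noncomputable def tripleLineIdeal (f g p α β γ : MvPolynomial (Fin 4) k) :
    Ideal (MvPolynomial (Fin 4) k) :=
  Ideal.span {X 0 ^ 3, X 0 ^ 2 * X 1, X 0 * X 1 ^ 2, X 1 ^ 3,
    X 0 * (X 0 * g - X 1 * f), X 1 * (X 0 * g - X 1 * f),
    α * X 0 ^ 2 + β * (X 0 * X 1) + γ * X 1 ^ 2 - p * (X 0 * g - X 1 * f)}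

variable {f g p α β γ α' β' γ' : MvPolynomial (Fin 4) k}

theorem lineIdeal_pow_three :
    lineIdeal k ^ 3 = Ideal.span {X 0 ^ 3, X 0 ^ 2 * X 1, X 0 * X 1 ^ 2, X 1 ^ 3} := by
  rw [lineIdeal, span_pair_pow]
  congr 1
  ext F
  simp only [Set.mem_range, Set.mem_insert_iff, Set.mem_singleton_iff, Fin.exists_fin_succ,
    eq_comm (b := F)]
  simp [or_comm, or_assoc]

theorem tripleLineIdeal_eq_sup : tripleLineIdeal f g p α β γ = lineIdeal k ^ 3 ⊔ Ideal.span
    {X 0 * doubleLineEq f g, X 1 * doubleLineEq f g, tripleLineEq f g p α β γ} := by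
  rw [lineIdeal_pow_three, ← Ideal.span_union]
  simp only [tripleLineIdeal, tripleLineEq, doubleLineEq, Set.insert_union, Set.singleton_union]

theorem doubleLineEq_mem (f g : MvPolynomial (Fin 4) k) : doubleLineEq f g ∈ lineIdeal k :=
  sub_mem (Ideal.mul_mem_right _ _ X_zero_mem_lineIdeal)
    (Ideal.mul_mem_right _ _ X_one_mem_lineIdeal)

theorem X_zero_mul_doubleLineEq_mem (f g : MvPolynomial (Fin 4) k) :
    X 0 * doubleLineEq f g ∈ lineIdeal k ^ 2 :=
  pow_two (lineIdeal k) ▸ Ideal.mul_mem_mul X_zero_mem_lineIdeal (doubleLineEq_mem f g)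

theorem X_one_mul_doubleLineEq_mem (f g : MvPolynomial (Fin 4) k) :
    X 1 * doubleLineEq f g ∈ lineIdeal k ^ 2 :=
  pow_two (lineIdeal k) ▸ Ideal.mul_mem_mul X_one_mem_lineIdeal (doubleLineEq_mem f g)

theorem exists_sub_mem_of_mem_tripleLineIdeal {F : MvPolynomial (Fin 4) k}
    (hF : F ∈ tripleLineIdeal f g p α β γ) :
    ∃ u v s, F - (u * (X 0 * doubleLineEq f g) + v * (X 1 * doubleLineEq f g)
      + s * tripleLineEq f g p α β γ) ∈ lineIdeal k ^ 3 := by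
  rw [tripleLineIdeal_eq_sup] at hF
  obtain ⟨c, hc, _, hD, rfl⟩ := Submodule.mem_sup.1 hF
  obtain ⟨u, v, s, rfl⟩ := Submodule.mem_span_triple.1 hD
  exact ⟨u, v, s, by simpa [smul_eq_mul] using hc⟩

theorem quadratic_mem_mul {J : Ideal (MvPolynomial (Fin 4) k)} (hα : α ∈ J) (hβ : β ∈ J)
    (hγ : γ ∈ J) : α * X 0 ^ 2 + β * (X 0 * X 1) + γ * X 1 ^ 2 ∈ J * lineIdeal k ^ 2 := by
  have hx := X_zero_mem_lineIdeal (k := k)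
  have hy := X_one_mem_lineIdeal (k := k)
  have hxy : X 0 * X 1 ∈ lineIdeal k ^ 2 := pow_two (lineIdeal k) ▸ Ideal.mul_mem_mul hx hy
  exact add_mem (add_mem (Ideal.mul_mem_mul hα (Ideal.pow_mem_pow hx 2))
    (Ideal.mul_mem_mul hβ hxy)) (Ideal.mul_mem_mul hγ (Ideal.pow_mem_pow hy 2))

theorem quadratic_mem (α β γ : MvPolynomial (Fin 4) k) :
    α * X 0 ^ 2 + β * (X 0 * X 1) + γ * X 1 ^ 2 ∈ lineIdeal k ^ 2 :=
  Ideal.mul_le_right (I := ⊤)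
    (quadratic_mem_mul Submodule.mem_top Submodule.mem_top Submodule.mem_top)

theorem mem_lineIdeal_of_linear_mem_sq {A B : MvPolynomial (Fin 4) k}
    (h : A * X 0 + B * X 1 ∈ lineIdeal k ^ 2) : A ∈ lineIdeal k ∧ B ∈ lineIdeal k := by
  have hc := mem_lineIdeal_of_sum_mem_pow (m := 1) (c := ![B, A]) (by
    simpa [Fin.sum_univ_succ, add_comm] using h)
  exact ⟨hc 1, hc 0⟩

theorem mem_lineIdeal_of_quadratic_mem_cube {A B C : MvPolynomial (Fin 4) k}
    (h : A * X 0 ^ 2 + B * (X 0 * X 1) + C * X 1 ^ 2 ∈ lineIdeal k ^ 3) :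
    A ∈ lineIdeal k ∧ B ∈ lineIdeal k ∧ C ∈ lineIdeal k := by
  have hc := mem_lineIdeal_of_sum_mem_pow (m := 2) (c := ![C, B, A]) (by
    simpa [Fin.sum_univ_succ, add_comm, add_left_comm, add_assoc] using h)
  exact ⟨hc 2, hc 1, hc 0⟩

theorem eq_zero_of_combination_mem_cube {u v s : MvPolynomial (Fin 2) k} (hp : restrict p ≠ 0)
    (hf : restrict f ≠ 0) (hg : restrict g ≠ 0)
    (h : extend u * (X 0 * doubleLineEq f g) + extend v * (X 1 * doubleLineEq f g)
      + extend s * tripleLineEq f g p α β γ ∈ lineIdeal k ^ 3) : u = 0 ∧ v = 0 ∧ s = 0 := by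
  have hs : s = 0 := by
    have hmem : extend u * (X 0 * doubleLineEq f g) + extend v * (X 1 * doubleLineEq f g)
        + extend s * (α * X 0 ^ 2 + β * (X 0 * X 1) + γ * X 1 ^ 2) ∈ lineIdeal k ^ 2 :=
      add_mem (add_mem (Ideal.mul_mem_left _ _ (X_zero_mul_doubleLineEq_mem f g))
        (Ideal.mul_mem_left _ _ (X_one_mul_doubleLineEq_mem f g)))
        (Ideal.mul_mem_left _ _ (quadratic_mem α β γ))
    have hlin := (mem_lineIdeal_of_linear_mem_sq (A := extend s * p * g)
      (B := -(extend s * p * f)) (by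
        convert sub_mem hmem (Ideal.pow_le_pow_right (Nat.le_succ 2) h) using 1
        simp only [tripleLineEq, doubleLineEq]
        ring)).1
    simpa [hp, hg, restrict_extend] using restrict_eq_zero_iff.2 hlin
  subst hs
  obtain ⟨hu, -, hv⟩ := mem_lineIdeal_of_quadratic_mem_cube (A := extend u * g)
    (B := extend v * g - extend u * f) (C := -(extend v * f)) (by
      convert h using 1
      simp only [doubleLineEq, map_zero]
      ring)
  have hu0 := restrict_eq_zero_iff.2 hu
  have hv0 := restrict_eq_zero_iff.2 hv
  exact ⟨by simpa [hg, restrict_extend] using hu0, by simpa [hf, restrict_extend] using hv0, rfl⟩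

theorem isBasisMod_tripleLineIdeal (hp : restrict p ≠ 0) (hf : restrict f ≠ 0)
    (hg : restrict g ≠ 0) :
    IsBasisMod ![2, 3] (lineIdeal k ^ 3) (tripleLineIdeal f g p α β γ)
      ![X 0 * doubleLineEq f g, X 1 * doubleLineEq f g, tripleLineEq f g p α β γ] where
  mem := by
    rw [tripleLineIdeal_eq_sup]
    exact fun i => Ideal.mem_sup_right (Ideal.subset_span (by fin_cases i <;> simp))
  spans F hF := by
    obtain ⟨u, v, s, h⟩ := exists_sub_mem_of_mem_tripleLineIdeal hF
    obtain ⟨A, B, hAB⟩ := Ideal.mem_span_pair.1 (sub_extend_restrict_mem s)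
    have hu := Ideal.mul_mem_mul (sub_extend_restrict_mem (u - p * A))
      (X_zero_mul_doubleLineEq_mem f g)
    have hv := Ideal.mul_mem_mul (sub_extend_restrict_mem (v - p * B))
      (X_one_mul_doubleLineEq_mem f g)
    have hs := Ideal.mul_mem_mul (sub_extend_restrict_mem s) (quadratic_mem α β γ)
    rw [← pow_succ'] at hu hv hs
    -- Since `h = -p l` modulo `Y²`, replacing `s` by its restriction changes `s h` modulo `Y³` by
    -- `(A x + B y) p l`: hence the shifts by `p A` and `p B`.
    refine ⟨![restrict (u - p * A), restrict (v - p * B), restrict s], ?_⟩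
    convert add_mem (add_mem (add_mem h hu) hv) hs using 1
    simp only [Fin.sum_univ_three, Matrix.cons_val, tripleLineEq]
    linear_combination p * doubleLineEq f g * hAB
  indep r hr := by
    simp only [Fin.sum_univ_three, Matrix.cons_val] at hr
    obtain ⟨hu, hv, hs⟩ := eq_zero_of_combination_mem_cube hp hf hg hr
    exact funext (Fin.forall_fin_succ.2 ⟨hu, Fin.forall_fin_two.2 ⟨hv, hs⟩⟩)

theorem tripleLineIdeal_le_of_restrict_eq (hf : restrict f ≠ 0)
    (hfg : IsRelPrime (restrict f) (restrict g))
    (h : restrict (α * f ^ 2 + β * (f * g) + γ * g ^ 2)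
      = restrict (α' * f ^ 2 + β' * (f * g) + γ' * g ^ 2)) :
    tripleLineIdeal f g p α β γ ≤ tripleLineIdeal f g p α' β' γ' := by
  obtain ⟨s, t, hα, hβ, hγ⟩ := exists_syzygy hf hfg (a := restrict (α - α'))
    (b := restrict (β - β')) (c := restrict (γ - γ')) (by
      simp only [map_add, map_sub, map_mul, map_pow] at h ⊢
      linear_combination h)
  have hA : α - α' - extend s * g ∈ lineIdeal k :=
    restrict_eq_zero_iff.1 (by rw [map_sub, hα, map_mul, restrict_extend, sub_self])
  have hB : β - β' - (extend t * g - extend s * f) ∈ lineIdeal k :=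
    restrict_eq_zero_iff.1 (by
      rw [map_sub, hβ, map_sub, map_mul, map_mul, restrict_extend, restrict_extend, sub_self])
  have hC : γ - γ' - -(extend t * f) ∈ lineIdeal k :=
    restrict_eq_zero_iff.1 (by rw [map_sub, hγ, map_neg, map_mul, restrict_extend, sub_self])
  have hcube := quadratic_mem_mul hA hB hC
  rw [← pow_succ'] at hcube
  rw [tripleLineIdeal_eq_sup, tripleLineIdeal_eq_sup]
  refine sup_le le_sup_left (Ideal.span_le.2 ?_)
  rintro _ (rfl | rfl | rfl)
  · exact Ideal.mem_sup_right (Ideal.subset_span (by simp))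
  · exact Ideal.mem_sup_right (Ideal.subset_span (by simp))
  · refine Submodule.mem_sup.2 ⟨_, hcube, _, Submodule.mem_span_triple.2
      ⟨extend s, extend t, 1, rfl⟩, ?_⟩
    simp only [smul_eq_mul, doubleLineEq, tripleLineEq]
    ring

theorem exists_isHomogeneous_tripleLineIdeal_eq {d m : ℕ} (hf : f.IsHomogeneous d)
    (hg : g.IsHomogeneous d) (hf0 : restrict f ≠ 0) (hfg : IsRelPrime (restrict f) (restrict g))
    (h : (restrict (α * f ^ 2 + β * (f * g) + γ * g ^ 2)).IsHomogeneous (m + 2 * d)) :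
    ∃ α' β' γ' : MvPolynomial (Fin 4) k, α'.IsHomogeneous m ∧ β'.IsHomogeneous m ∧
      γ'.IsHomogeneous m ∧ tripleLineIdeal f g p α β γ = tripleLineIdeal f g p α' β' γ' := by
  let part (F : MvPolynomial (Fin 4) k) := extend (homogeneousComponent m (restrict F))
  have hpart F : (part F).IsHomogeneous m :=
    (homogeneousComponent_isHomogeneous m _).rename_isHomogeneous
  have hrestrict : restrict (α * f ^ 2 + β * (f * g) + γ * g ^ 2)
      = restrict (part α * f ^ 2 + part β * (f * g) + part γ * g ^ 2) := by
    simp only [map_add, map_mul, map_pow, part, restrict_extend] at h ⊢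
    exact (homogeneousComponent_quadratic (isHomogeneous_restrict hf)
      (isHomogeneous_restrict hg) h).symm
  exact ⟨part α, part β, part γ, hpart α, hpart β, hpart γ,
    (tripleLineIdeal_le_of_restrict_eq hf0 hfg hrestrict).antisymm
      (tripleLineIdeal_le_of_restrict_eq hf0 hfg hrestrict.symm)⟩

theorem isHomogeneous_doubleLineEq {d : ℕ} (hf : f.IsHomogeneous d) (hg : g.IsHomogeneous d) :
    (doubleLineEq f g).IsHomogeneous (1 + d) :=
  ((isHomogeneous_X k 0).mul hg).sub ((isHomogeneous_X k 1).mul hf)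

theorem isHomogeneous_tripleLineEq {a b : ℕ} (hf : f.IsHomogeneous (a + 1))
    (hg : g.IsHomogeneous (a + 1)) (hp : p.IsHomogeneous b) (hα : α.IsHomogeneous (a + b))
    (hβ : β.IsHomogeneous (a + b)) (hγ : γ.IsHomogeneous (a + b)) :
    (tripleLineEq f g p α β γ).IsHomogeneous (a + b + 2) := by
  have hpl := hp.mul (isHomogeneous_doubleLineEq hf hg)
  rw [show b + (1 + (a + 1)) = a + b + 2 by ring] at hpl
  exact (((hα.mul (isHomogeneous_X_pow 0 2)).add
    (hβ.mul ((isHomogeneous_X k 0).mul (isHomogeneous_X k 1)))).add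
    (hγ.mul (isHomogeneous_X_pow 1 2))).sub hpl

theorem gradedPieceDim_tripleLineIdeal {a b n : ℕ} (hf : f.IsHomogeneous (a + 1))
    (hg : g.IsHomogeneous (a + 1)) (hp : p.IsHomogeneous b) (hα : α.IsHomogeneous (a + b))
    (hβ : β.IsHomogeneous (a + b)) (hγ : γ.IsHomogeneous (a + b)) (hf0 : restrict f ≠ 0)
    (hg0 : restrict g ≠ 0) (hp0 : restrict p ≠ 0) (hn : a + b + 3 ≤ n) :
    gradedPieceDim k (tripleLineIdeal f g p α β γ) n = 3 * n + 3 + 3 * a + b := by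
  have hl : (doubleLineEq f g).IsHomogeneous (a + 2) :=
    add_comm (a + 1) 1 ▸ isHomogeneous_doubleLineEq hf hg
  let d : Fin 3 → ℕ := ![1 + (a + 2), 1 + (a + 2), a + b + 2]
  have hd : ∀ i, d i ≤ n :=
    Fin.forall_fin_succ.2 ⟨show 1 + (a + 2) ≤ n by lia,
      Fin.forall_fin_two.2 ⟨show 1 + (a + 2) ≤ n by lia, show a + b + 2 ≤ n by lia⟩⟩
  have hcount := (isBasisMod_tripleLineIdeal (α := α) (β := β) (γ := γ) hp0 hf0 hg0
    ).gradedPieceDim_add_sum (d := d) (le_sup_left.trans_eq tripleLineIdeal_eq_sup.symm)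
    (isHomogeneous_lineIdeal_pow 3)
    (Fin.forall_fin_succ.2 ⟨(isHomogeneous_X k 0).mul hl, Fin.forall_fin_two.2
      ⟨(isHomogeneous_X k 1).mul hl, isHomogeneous_tripleLineEq hf hg hp hα hβ hγ⟩⟩) hd
  rw [gradedPieceDim_lineIdeal_pow (by lia)] at hcount
  simp only [d, Fin.sum_univ_three, Matrix.cons_val, Finset.sum_range_succ,
    Finset.sum_range_zero] at hcount
  lia

end TripleLineIdeal

end TripleLine

open TripleLine in
theorem stmt_11_general {k : Type*} [Field k] {a b n : ℕ} {f g p q α β γ : MvPolynomial (Fin 4) k}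
    (hf : f.IsHomogeneous (a + 1)) (hg : g.IsHomogeneous (a + 1)) (hp : p.IsHomogeneous b)
    (hq : q.IsHomogeneous (3 * a + b + 2))
    (hfg : IsRelPrime (restrict f) (restrict g))
    (hp0 : restrict p ≠ 0)
    (hqcong : q - (α * f ^ 2 + β * (f * g) + γ * g ^ 2) ∈ lineIdeal k)
    (hn : a + b + 3 ≤ n) :
    gradedPieceDim k (tripleLineIdeal f g p α β γ) n = 3 * n + 3 + 3 * a + b := by
  have hf0 := ne_zero_of_isRelPrime hfg (isHomogeneous_restrict hg) (by lia)
  have hg0 := ne_zero_of_isRelPrime hfg.symm (isHomogeneous_restrict hf) (by lia)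
  have hquad : (restrict (α * f ^ 2 + β * (f * g) + γ * g ^ 2)).IsHomogeneous
      (a + b + 2 * (a + 1)) := by
    rw [← sub_eq_zero.1 ((map_sub _ _ _).symm.trans (restrict_eq_zero_iff.2 hqcong))]
    convert isHomogeneous_restrict hq using 1
    ring
  obtain ⟨α', β', γ', hα', hβ', hγ', hI⟩ :=
    exists_isHomogeneous_tripleLineIdeal_eq (p := p) hf hg hf0 hfg hquad
  rw [hI]
  exact gradedPieceDim_tripleLineIdeal hf hg hp hα' hβ' hγ' hf0 hg0 hp0 hn

/-- the triple line `W` of type `(a,b)` with saturated ideal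
`I_W = (x³, x²y, xy², y³, x(xg−yf), y(xg−yf), αx² + βxy + γy² − p(xg−yf))` has Hilbert
polynomial `3n + 3 + 3a + b`, i.e. it is a curve of degree `3` and genus `−2−3a−b`. -/
theorem stmt_11 {k : Type*} [Field k] [IsAlgClosed k] (a b : ℕ)
    (f g p q α β γ : MvPolynomial (Fin 4) k)
    (hf : f.IsHomogeneous (a + 1)) (hg : g.IsHomogeneous (a + 1))
    (hp : p.IsHomogeneous b) (hq : q.IsHomogeneous (3 * a + b + 2))
    (hfg : NoCommonZerosAlongY f g) (hpq : NoCommonZerosAlongY p q)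
    (dα dβ dγ : ℕ) (hα : α.IsHomogeneous dα) (hβ : β.IsHomogeneous dβ)
    (hγ : γ.IsHomogeneous dγ)
    (hqcong : q - (α * f ^ 2 + β * (f * g) + γ * g ^ 2)
      ∈ (Ideal.span {X 0, X 1} : Ideal (MvPolynomial (Fin 4) k))) :
    ∃ N : ℕ, ∀ n : ℕ, N ≤ n →
      (gradedPieceDim k (Ideal.span {X 0 ^ 3, X 0 ^ 2 * X 1, X 0 * X 1 ^ 2, X 1 ^ 3,
          X 0 * (X 0 * g - X 1 * f), X 1 * (X 0 * g - X 1 * f),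
          α * X 0 ^ 2 + β * (X 0 * X 1) + γ * X 1 ^ 2 - p * (X 0 * g - X 1 * f)}) n : ℤ)
        = 3 * n + 3 + 3 * a + b := by
  have hp0 := TripleLine.ne_zero_of_isRelPrime (TripleLine.isRelPrime_restrict hpq)
    (TripleLine.isHomogeneous_restrict hq) (by lia)
  exact ⟨a + b + 3, fun n hn => mod_cast stmt_11_general hf hg hp hq
    (TripleLine.isRelPrime_restrict hfg) hp0 hqcong hn⟩
end

section
/- Let a ≥ 0 be an integer and let f, g ∈ k[z,w] ⊂ S be homogeneous polynomials of degree a+1 in the variables z, w only, with no common zeros along Y. Then, as ideals of S, ((x,y)²·(z,w)) + (xg − yf) = (x², xy, y², xg − yf) ∩ (z,w). (That is, the ideal J = ((x,y)²(z,w), xg−yf) is the saturated total ideal of the disjoint union of the double line Z with ideal (x², xy, y², xg−yf) and the line L = {z = w = 0}.) -/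
open MvPolynomial

/-!
Setting `z = w = 0` defines a retraction of `k[x, y, z, w]` onto `k[x, y]` with kernel `(z, w)`.
If an ideal `A` is generated by elements which a retraction `φ` fixes, then every `p ∈ A` satisfies
`p - φ p ∈ A * ker φ`, hence `A ⊓ ker φ = A * ker φ`; this applies to `A = (x, y)²`. Since
`x g - y f` lies in `(z, w)`, the modular law for ideals turns `((x, y)² + (x g - y f)) ⊓ (z, w)`
into `((x, y)² ⊓ (z, w)) + (x g - y f)`.
-/

section Retraction

variable {S : Type*} [CommRing S] {φ : S →+* S} {T : Set S}

lemma sub_map_mem_span_mul_ker (hφ : ∀ p, φ (φ p) = φ p) (hT : ∀ t ∈ T, φ t = t)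
    {p : S} (hp : p ∈ Ideal.span T) : p - φ p ∈ Ideal.span T * RingHom.ker φ := by
  induction hp using Submodule.span_induction with
  | mem t ht => simp [hT t ht]
  | zero => simp
  | add p q _ _ hp hq =>
    rw [map_add, add_sub_add_comm]
    exact add_mem hp hq
  | smul a p hp ih =>
    have ha : a - φ a ∈ RingHom.ker φ := by simp [RingHom.mem_ker, hφ]
    have decomposition : a • p - φ (a • p) = p * (a - φ a) + φ a * (p - φ p) := by
      rw [smul_eq_mul, map_mul]
      ring
    rw [decomposition]
    exact add_mem (Ideal.mul_mem_mul hp ha) (Ideal.mul_mem_left _ _ ih)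

theorem span_inf_ker_eq_span_mul_ker (hφ : ∀ p, φ (φ p) = φ p) (hT : ∀ t ∈ T, φ t = t) :
    Ideal.span T ⊓ RingHom.ker φ = Ideal.span T * RingHom.ker φ := by
  refine le_antisymm (fun p ⟨hpT, hpφ⟩ ↦ ?_) Ideal.mul_le_inf
  simpa [RingHom.mem_ker.mp hpφ] using sub_map_mem_span_mul_ker hφ hT hpT

end Retraction

section KillVars

variable {σ R : Type*} [CommRing R] {s : Set σ}

variable (R s) in
/-- The retraction of `R[X_i : i ∈ σ]` onto the polynomials in the variables outside `s`, setting
the variables in `s` to zero. It is encoded as an endomorphism so that its fixed points make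
sense. -/
noncomputable def killVars : MvPolynomial σ R →ₐ[R] MvPolynomial σ R :=
  aeval (sᶜ.indicator X)

lemma killVars_X_of_mem {i : σ} (hi : i ∈ s) : killVars R s (X i) = 0 := by
  simp [killVars, hi]

lemma killVars_X_of_notMem {i : σ} (hi : i ∉ s) : killVars R s (X i) = X i := by
  simp [killVars, hi]

lemma killVars_of_mem_supported_compl {p : MvPolynomial σ R} (hp : p ∈ supported R sᶜ) :
    killVars R s p = p := by
  have agree : (X '' sᶜ).EqOn (killVars R s) (AlgHom.id R (MvPolynomial σ R)) := by
    rintro _ ⟨i, hi, rfl⟩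
    exact killVars_X_of_notMem hi
  exact AlgHom.adjoin_le_equalizer _ _ agree hp

lemma killVars_of_mem_supported {p : MvPolynomial σ R} (hp : p ∈ supported R s) :
    killVars R s p = C (constantCoeff p) := by
  have agree : (X '' s).EqOn (killVars R s) (aeval (0 : σ → MvPolynomial σ R)) := by
    rintro _ ⟨i, hi, rfl⟩
    simp [killVars_X_of_mem hi]
  exact (AlgHom.adjoin_le_equalizer _ _ agree hp).trans (aeval_zero p)

lemma killVars_killVars (p : MvPolynomial σ R) :
    killVars R s (killVars R s p) = killVars R s p := by
  refine DFunLike.congr_fun (f := (killVars R s).comp (killVars R s)) (algHom_ext fun i ↦ ?_) p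
  by_cases hi : i ∈ s
  · simp [killVars_X_of_mem hi]
  · simp [killVars_X_of_notMem hi]

lemma sub_killVars_mem_span_X_image (p : MvPolynomial σ R) :
    p - killVars R s p ∈ Ideal.span (X '' s) := by
  rw [← Ideal.Quotient.mk_eq_mk_iff_sub_mem]
  let π := Ideal.Quotient.mkₐ R (Ideal.span (X '' s : Set (MvPolynomial σ R)))
  refine DFunLike.congr_fun (f := π) (g := π.comp (killVars R s)) (algHom_ext fun i ↦ ?_) p
  by_cases hi : i ∈ s
  · have hX : X i ∈ Ideal.span (X '' s : Set (MvPolynomial σ R)) :=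
      Ideal.subset_span (Set.mem_image_of_mem X hi)
    simpa [π, killVars_X_of_mem hi] using Ideal.Quotient.eq_zero_iff_mem.mpr hX
  · simp [killVars_X_of_notMem hi]

theorem ker_killVars :
    RingHom.ker (killVars R s : MvPolynomial σ R →+* MvPolynomial σ R) = Ideal.span (X '' s) := by
  refine le_antisymm (fun p hp ↦ ?_) (Ideal.span_le.mpr ?_)
  · have hp0 : killVars R s p = 0 := hp
    simpa [hp0] using sub_killVars_mem_span_X_image (s := s) p
  · rintro _ ⟨i, hi, rfl⟩
    exact killVars_X_of_mem hi

lemma mem_span_X_image_of_mem_supported {p : MvPolynomial σ R} (hp : p ∈ supported R s)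
    (h0 : constantCoeff p = 0) : p ∈ Ideal.span (X '' s) := by
  simpa [killVars_of_mem_supported hp, h0] using sub_killVars_mem_span_X_image (s := s) p

lemma mem_span_X_image_of_isHomogeneous {p : MvPolynomial σ R} {n : ℕ} (hp : p ∈ supported R s)
    (hhom : p.IsHomogeneous n) (hn : n ≠ 0) : p ∈ Ideal.span (X '' s) :=
  mem_span_X_image_of_mem_supported hp (hhom.coeff_eq_zero (by simpa using hn.symm))

theorem span_inf_span_X_image_eq_mul {T : Set (MvPolynomial σ R)} (hT : T ⊆ supported R sᶜ) :
    Ideal.span T ⊓ Ideal.span (X '' s) = Ideal.span T * Ideal.span (X '' s) := by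
  rw [← ker_killVars]
  exact span_inf_ker_eq_span_mul_ker killVars_killVars
    fun t ht ↦ killVars_of_mem_supported_compl (hT ht)

open scoped Pointwise in
theorem span_X_image_pow_inf_span_X_image {t : Set σ} (hts : Disjoint t s) (n : ℕ) :
    Ideal.span (X '' t : Set (MvPolynomial σ R)) ^ n ⊓ Ideal.span (X '' s) =
      Ideal.span (X '' t) ^ n * Ideal.span (X '' s) := by
  have ht : X '' t ⊆ (supported R sᶜ : Set (MvPolynomial σ R)) :=
    (Set.image_mono hts.subset_compl_right).trans Algebra.subset_adjoin
  have hpow : Ideal.span (X '' t : Set (MvPolynomial σ R)) ^ n = Ideal.span ((X '' t) ^ n) :=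
    Submodule.span_pow _ n
  rw [hpow]
  exact span_inf_span_X_image_eq_mul (Submonoid.pow_subset (S := (supported R sᶜ).toSubmonoid) ht)

end KillVars

lemma span_pair_sq_s14 {R : Type*} [CommSemiring R] (u v : R) :
    Ideal.span {u, v} ^ 2 = Ideal.span {u ^ 2, u * v, v ^ 2} := by
  rw [sq, Ideal.span_pair_mul_span_pair, mul_comm v u]
  simp [sq]

theorem stmt_14_general {k : Type*} [CommRing k] {f g : MvPolynomial (Fin 4) k}
    (hf : f ∈ Ideal.span {X 2, X 3}) (hg : g ∈ Ideal.span {X 2, X 3}) :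
    (Ideal.span {X 0, X 1} : Ideal (MvPolynomial (Fin 4) k)) ^ 2 * Ideal.span {X 2, X 3}
        + Ideal.span {X 0 * g - X 1 * f}
      = Ideal.span {X 0 ^ 2, X 0 * X 1, X 1 ^ 2, X 0 * g - X 1 * f}
        ⊓ Ideal.span {X 2, X 3} := by
  have hq : Ideal.span {X 0 * g - X 1 * f} ≤ Ideal.span {X 2, X 3} :=
    (Ideal.span_singleton_le_iff_mem _).mpr
      (sub_mem (Ideal.mul_mem_left _ _ hg) (Ideal.mul_mem_left _ _ hf))
  have disjoint_vars :
      Ideal.span {X 0, X 1} ^ 2 ⊓ Ideal.span {X 2, X 3} =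
        (Ideal.span {X 0, X 1} ^ 2 * Ideal.span {X 2, X 3} : Ideal (MvPolynomial (Fin 4) k)) := by
    simp only [← Set.image_pair]
    exact span_X_image_pow_inf_span_X_image (by simp) 2
  have hZ : Ideal.span {X 0 ^ 2, X 0 * X 1, X 1 ^ 2, X 0 * g - X 1 * f} =
      Ideal.span {X 0 * g - X 1 * f} ⊔ Ideal.span {X 0, X 1} ^ 2 := by
    rw [span_pair_sq_s14, ← Ideal.span_insert]
    congr 1
    grind
  rw [hZ, sup_inf_assoc_of_le _ hq, disjoint_vars, Submodule.add_eq_sup, sup_comm]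

/-- for `f, g ∈ k[z,w]` homogeneous of degree `a+1` with no common zeros
along `Y`, the ideal `(x,y)²·(z,w) + (xg − yf)` equals
`(x², xy, y², xg − yf) ∩ (z,w)`: it is the saturated total ideal of the disjoint union
of the double line `Z` and the line `L = {z = w = 0}`. -/
theorem stmt_14 {k : Type*} [Field k] [IsAlgClosed k] (a : ℕ)
    (f g : MvPolynomial (Fin 4) k)
    (hfzw : f ∈ supported k ({2, 3} : Set (Fin 4)))
    (hgzw : g ∈ supported k ({2, 3} : Set (Fin 4)))
    (hf : f.IsHomogeneous (a + 1)) (hg : g.IsHomogeneous (a + 1))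
    (hfg : NoCommonZerosAlongY f g) :
    (Ideal.span {X 0, X 1} : Ideal (MvPolynomial (Fin 4) k)) ^ 2 * Ideal.span {X 2, X 3}
        + Ideal.span {X 0 * g - X 1 * f}
      = Ideal.span {X 0 ^ 2, X 0 * X 1, X 1 ^ 2, X 0 * g - X 1 * f}
        ⊓ Ideal.span {X 2, X 3} := by
  have zw_eq : (X '' {2, 3} : Set (MvPolynomial (Fin 4) k)) = {X 2, X 3} := Set.image_pair ..
  exact stmt_14_general (zw_eq ▸ mem_span_X_image_of_isHomogeneous hfzw hf a.succ_ne_zero)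
    (zw_eq ▸ mem_span_X_image_of_isHomogeneous hgzw hg a.succ_ne_zero)
end

section
/- Let a ≥ 0 be an integer and let f, g ∈ k[z,w] ⊂ S be homogeneous polynomials of degree a+1 in the variables z, w only, with no common zeros along Y. Set J = ((x,y)²·(z,w)) + (xg − yf). Then for all sufficiently large n, the k-dimension of the degree-n graded component of S/J equals 3n + 3 + a. (Equivalently, the disjoint union W = Z ∪ L of the double line Z with ideal (x², xy, y², xg−yf) and the line L = {z = w = 0} is a curve of degree 3 and arithmetic genus −2−a, the same Hilbert polynomial as a triple line of type (a, −2−3a−g) with g = −2−a... i.e., as predicted by p_a(W) = p_a(Z) − 1.) -/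
open MvPolynomial

/-! `S/J` is spanned by the monomials of bidegree `(0, *)`, `(1, *)` and `(*, 0)` in `(x, y)` and
`(z, w)`, because every other monomial lies in the monomial ideal `I = (x,y)²(z,w)`; there are
`4n + 2` of them in degree `n ≥ 2`. The polynomial `q = xg − yf` has bidegree `(1, a + 1)`, so
multiplying it by a monomial gives either a combination of these standard monomials of degree `n`
(exactly when the monomial has bidegree `(0, n − a − 2)`) or a polynomial not involving them at all.
The relations of degree `n` among the standard monomials are therefore `q · k[z,w]_{n-a-2}`, of
dimension `n − a − 1`. -/

lemma finrank_map_add_finrank_inf_ker {K V W : Type*} [DivisionRing K] [AddCommGroup V] [Module K V]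
    [AddCommGroup W] [Module K W] (f : V →ₗ[K] W) (U : Submodule K V) [Module.Finite K U] :
    Module.finrank K (U.map f) + Module.finrank K ↥(U ⊓ LinearMap.ker f) = Module.finrank K U := by
  rw [← (f.domRestrict U).finrank_range_add_finrank_ker, LinearMap.range_domRestrict,
    LinearMap.ker_domRestrict, ← Submodule.finrank_map_subtype_eq, Submodule.map_comap_subtype]

section MonomialSpans

variable {σ R : Type*}

section CommSemiring

variable [CommSemiring R]

lemma homogeneousSubmodule_eq_restrictSupport (n : ℕ) :
    homogeneousSubmodule σ R n = restrictSupport R {m | m.degree = n} :=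
  homogeneousSubmodule_eq_finsupp_supported σ R n

lemma disjoint_restrictSupport_compl (s : Set (σ →₀ ℕ)) :
    Disjoint (restrictSupport R s) (restrictSupport R sᶜ) := by
  rw [Submodule.disjoint_def]
  intro p hs hsc
  rw [← support_eq_empty]
  exact Finset.eq_empty_of_forall_notMem fun m hm => hsc hm (hs hm)

lemma restrictSupport_sup_compl (s : Set (σ →₀ ℕ)) :
    restrictSupport R s ⊔ restrictSupport R sᶜ = ⊤ := by
  rw [restrictSupport_eq_span, restrictSupport_eq_span, ← Submodule.span_union, ← Set.image_union,
    Set.union_compl_self, ← restrictSupport_eq_span, restrictSupport_univ]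

lemma mul_mem_restrictSupport {s t u : Set (σ →₀ ℕ)} {p q : MvPolynomial σ R}
    (hp : p ∈ restrictSupport R s) (hq : q ∈ restrictSupport R t)
    (h : ∀ m ∈ s, ∀ m' ∈ t, m + m' ∈ u) : p * q ∈ restrictSupport R u :=
  restrictSupport_mono R (Set.add_subset_iff.2 h)
    (restrictSupport_add R s t ▸ Submodule.mul_mem_mul hp hq)

end CommSemiring

section CommRing

variable [CommRing R]

lemma finrank_restrictSupport [Nontrivial R] (s : Finset (σ →₀ ℕ)) :
    Module.finrank R (restrictSupport R (s : Set (σ →₀ ℕ))) = s.card := by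
  rw [Module.finrank_eq_nat_card_basis (basisRestrictSupport R _), Nat.card_coe_set_eq,
    Set.ncard_coe_finset]

lemma map_mkₐ_restrictSupport_eq {s t : Set (σ →₀ ℕ)} {I : Ideal (MvPolynomial σ R)} (hts : t ⊆ s)
    (hI : ∀ m ∈ s, m ∉ t → monomial m 1 ∈ I) :
    (restrictSupport R s).map (Ideal.Quotient.mkₐ R I).toLinearMap =
      (restrictSupport R t).map (Ideal.Quotient.mkₐ R I).toLinearMap := by
  refine le_antisymm ?_ (Submodule.map_mono (restrictSupport_mono R hts))
  rw [restrictSupport_eq_span, Submodule.map_span_le]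
  rintro _ ⟨m, hms, rfl⟩
  by_cases hmt : m ∈ t
  · exact Submodule.mem_map_of_mem ((monomial_mem_restrictSupport R).2 (Or.inl hmt))
  · have hzero : (Ideal.Quotient.mkₐ R I).toLinearMap (monomial m 1) = 0 :=
      Ideal.Quotient.eq_zero_iff_mem.2 (hI m hms hmt)
    exact hzero ▸ Submodule.zero_mem _

lemma restrictSupport_inf_sup_span_singleton {b e t : Set (σ →₀ ℕ)} {I : Ideal (MvPolynomial σ R)}
    {q : MvPolynomial σ R} (hI : I.restrictScalars R ≤ restrictSupport R bᶜ)
    (hq : q ∈ restrictSupport R t) (he : ∀ m ∈ e, ∀ m' ∈ t, m + m' ∈ b)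
    (hec : ∀ m ∈ eᶜ, ∀ m' ∈ t, m + m' ∈ bᶜ) :
    restrictSupport R b ⊓ (I ⊔ Ideal.span {q}).restrictScalars R =
      (restrictSupport R e).map (LinearMap.mulRight R q) := by
  apply le_antisymm
  · rintro p ⟨hpb, hp⟩
    obtain ⟨i, hi, r, hr, rfl⟩ := Submodule.mem_sup.1 hp
    obtain ⟨h, rfl⟩ := Ideal.mem_span_singleton'.1 hr
    obtain ⟨u, hu, v, hv, rfl⟩ := Submodule.mem_sup.1
      (restrictSupport_sup_compl (R := R) e ▸ Submodule.mem_top : h ∈ _)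
    have huq : u * q ∈ restrictSupport R b := mul_mem_restrictSupport hu hq he
    have hrest : i + v * q ∈ restrictSupport R bᶜ :=
      Submodule.add_mem _ (hI hi) (mul_mem_restrictSupport hv hq hec)
    have hsplit : i + (u + v) * q = u * q + (i + v * q) := by ring
    have hzero : i + v * q = 0 := by
      rw [hsplit] at hpb
      exact Submodule.disjoint_def.1 (disjoint_restrictSupport_compl b) _
        ((Submodule.add_mem_iff_right _ huq).1 hpb) hrest
    exact ⟨u, hu, by rw [hsplit, hzero, add_zero, LinearMap.mulRight_apply]⟩
  · rintro _ ⟨u, hu, rfl⟩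
    exact ⟨mul_mem_restrictSupport hu hq he,
      Submodule.mem_sup_right (Ideal.mem_span_singleton'.2 ⟨u, rfl⟩)⟩

end CommRing

variable {k : Type*} [Field k]

theorem finrank_map_mkₐ_sup_span_singleton_add_card {s t : Set (σ →₀ ℕ)} {b e : Finset (σ →₀ ℕ)}
    {I : Ideal (MvPolynomial σ k)} {q : MvPolynomial σ k} (hbs : ↑b ⊆ s)
    (hsI : ∀ m ∈ s, m ∉ b → monomial m 1 ∈ I) (hI : I.restrictScalars k ≤ restrictSupport k (↑b)ᶜ)
    (hq0 : q ≠ 0) (hq : q ∈ restrictSupport k t) (he : ∀ m ∈ e, ∀ m' ∈ t, m + m' ∈ b)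
    (hec : ∀ m ∉ e, ∀ m' ∈ t, m + m' ∉ b) :
    Module.finrank k ((restrictSupport k s).map
      (Ideal.Quotient.mkₐ k (I ⊔ Ideal.span {q})).toLinearMap) + e.card = b.card := by
  have : Module.Finite k (restrictSupport k (b : Set (σ →₀ ℕ))) :=
    Module.Finite.of_basis (basisRestrictSupport k _)
  have hcard : Module.finrank k ((restrictSupport k (e : Set (σ →₀ ℕ))).map
      (LinearMap.mulRight k q)) = e.card := by
    rw [← finrank_restrictSupport e (R := k)]
    exact (Submodule.equivMapOfInjective _ (mul_left_injective₀ hq0) _).finrank_eq.symm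
  have hker : LinearMap.ker (Ideal.Quotient.mkₐ k (I ⊔ Ideal.span {q})).toLinearMap =
      (I ⊔ Ideal.span {q}).restrictScalars k :=
    Submodule.ext fun _ => Ideal.Quotient.eq_zero_iff_mem
  rw [map_mkₐ_restrictSupport_eq hbs fun m hms hmb => Submodule.mem_sup_left (hsI m hms hmb),
    ← hcard, ← restrictSupport_inf_sup_span_singleton hI hq he hec,
    ← hker, finrank_map_add_finrank_inf_ker, finrank_restrictSupport]

end MonomialSpans

section MonomialIdeals

variable {σ R : Type*} [CommSemiring R]

lemma le_sum_of_mem_span_X_image_pow {s : Finset σ} {n : ℕ} {p : MvPolynomial σ R}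
    (hp : p ∈ Ideal.span (X '' (s : Set σ)) ^ n) {m : σ →₀ ℕ} (hm : m ∈ p.support) :
    n ≤ ∑ i ∈ s, m i := by
  classical
  induction n generalizing p m with
  | zero => exact Nat.zero_le _
  | succ n ih =>
    rw [pow_succ] at hp
    induction hp using Submodule.mul_induction_on' with
    | mem_mul_mem u hu v hv =>
      obtain ⟨m₁, hm₁, m₂, hm₂, rfl⟩ := Finset.mem_add.1 (support_mul u v hm)
      obtain ⟨i, his, hi⟩ := mem_ideal_span_X_image.1 hv m₂ hm₂
      have hm₂pos : 1 ≤ ∑ i ∈ s, m₂ i :=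
        (Nat.one_le_iff_ne_zero.2 hi).trans (Finset.single_le_sum (fun _ _ => Nat.zero_le _) his)
      simpa only [Finsupp.add_apply, Finset.sum_add_distrib] using add_le_add (ih hu hm₁) hm₂pos
    | add u _ v _ hu hv => exact (Finset.mem_union.1 (support_add hm)).elim hu hv

lemma prod_X_pow_mem_span_X_image_pow (s : Finset σ) (m : σ →₀ ℕ) :
    ∏ i ∈ s, (X i : MvPolynomial σ R) ^ m i ∈ Ideal.span (X '' (s : Set σ)) ^ ∑ i ∈ s, m i := by
  rw [← Finset.prod_pow_eq_pow_sum]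
  exact Ideal.prod_mem_prod fun i hi =>
    Ideal.pow_mem_pow (Ideal.subset_span (Set.mem_image_of_mem X hi)) _

lemma prod_X_pow_dvd_monomial (s : Finset σ) (m : σ →₀ ℕ) (r : R) :
    ∏ i ∈ s, (X i : MvPolynomial σ R) ^ m i ∣ monomial m r := by
  classical
  rw [monomial_eq, Finsupp.prod_of_support_subset m (s := s ∪ m.support)
    Finset.subset_union_right _ fun i _ => pow_zero (X i)]
  exact (Finset.prod_dvd_prod_of_subset _ _ _ Finset.subset_union_left).mul_left _

lemma monomial_mem_span_X_image_pow_mul {s t : Finset σ} (hst : Disjoint s t) {a b : ℕ}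
    {m : σ →₀ ℕ} (ha : a ≤ ∑ i ∈ s, m i) (hb : b ≤ ∑ i ∈ t, m i) (r : R) :
    monomial m r ∈ Ideal.span (X '' (s : Set σ)) ^ a * Ideal.span (X '' (t : Set σ)) ^ b := by
  classical
  refine Ideal.mem_of_dvd _ (prod_X_pow_dvd_monomial (s ∪ t) m r) ?_
  rw [Finset.prod_union hst]
  exact Ideal.mul_mem_mul (Ideal.pow_le_pow_right ha (prod_X_pow_mem_span_X_image_pow s m))
    (Ideal.pow_le_pow_right hb (prod_X_pow_mem_span_X_image_pow t m))

theorem mem_span_X_image_pow_mul_iff {s t : Finset σ} (hst : Disjoint s t) {a b : ℕ}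
    {p : MvPolynomial σ R} :
    p ∈ Ideal.span (X '' (s : Set σ)) ^ a * Ideal.span (X '' (t : Set σ)) ^ b ↔
      ∀ m ∈ p.support, a ≤ ∑ i ∈ s, m i ∧ b ≤ ∑ i ∈ t, m i := by
  refine ⟨fun hp m hm => ⟨le_sum_of_mem_span_X_image_pow (Ideal.mul_le_left hp) hm,
    le_sum_of_mem_span_X_image_pow (Ideal.mul_le_right hp) hm⟩, fun hp => ?_⟩
  rw [p.as_sum]
  exact Ideal.sum_mem _ fun m hm =>
    monomial_mem_span_X_image_pow_mul hst (hp m hm).1 (hp m hm).2 _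

lemma aeval_eq_self_of_mem_supported {s : Set σ} {p : MvPolynomial σ R} (hp : p ∈ supported R s)
    {v : σ → MvPolynomial σ R} (hv : ∀ i ∈ s, v i = X i) : aeval v p = p := by
  have hvars : ∀ i ∈ p.vars, aeval v (X i : MvPolynomial σ R) = X i := fun i hi => by
    rw [aeval_X, hv i (mem_supported.1 hp hi)]
  exact hom_congr_vars (f₁ := (aeval v : _ →ₐ[R] _).toRingHom) (f₂ := RingHom.id _)
    (by ext; simp) (fun i hi _ => hvars i hi) rfl

lemma apply_eq_zero_of_mem_supported {s : Set σ} {p : MvPolynomial σ R} (hp : p ∈ supported R s)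
    {m : σ →₀ ℕ} (hm : m ∈ p.support) {i : σ} (hi : i ∉ s) : m i = 0 := by
  by_contra hmi
  exact hi (mem_supported.1 hp
    ((mem_vars_iff_mem_support i).2 ⟨m, hm, Finsupp.mem_support_iff.2 hmi⟩))

end MonomialIdeals

section Bidegree

/-- Exponent vectors on `x, y, z, w`, split into the `(x, y)` part and the `(z, w)` part. -/
@[simps apply]
noncomputable def exponentEquiv : (Fin 4 →₀ ℕ) ≃ (ℕ × ℕ) × (ℕ × ℕ) where
  toFun m := ((m 0, m 1), (m 2, m 3))
  invFun e := Finsupp.equivFunOnFinite.symm ![e.1.1, e.1.2, e.2.1, e.2.2]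
  left_inv m := by ext i; fin_cases i <;> rfl
  right_inv _ := rfl

/-- The exponents of the monomials of degree `i` in `x, y` and degree `j` in `z, w`. -/
noncomputable def exponentsOfBidegree (i j : ℕ) : Finset (Fin 4 →₀ ℕ) :=
  (Finset.HasAntidiagonal.antidiagonal i ×ˢ Finset.HasAntidiagonal.antidiagonal j).map
    exponentEquiv.symm.toEmbedding

@[simp]
lemma mem_exponentsOfBidegree {i j : ℕ} {m : Fin 4 →₀ ℕ} :
    m ∈ exponentsOfBidegree i j ↔ m 0 + m 1 = i ∧ m 2 + m 3 = j := by
  simp [exponentsOfBidegree]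

lemma card_exponentsOfBidegree (i j : ℕ) :
    (exponentsOfBidegree i j).card = (i + 1) * (j + 1) := by
  simp [exponentsOfBidegree]

/-- The exponents of the monomials of degree `n` outside the ideal `(x,y)²(z,w)`. Meant for
`2 ≤ n`: otherwise the three bidegrees need not be distinct, and `n - 1` truncates at `n = 0`. -/
noncomputable def standardExponents (n : ℕ) : Finset (Fin 4 →₀ ℕ) :=
  exponentsOfBidegree 0 n ∪ exponentsOfBidegree 1 (n - 1) ∪ exponentsOfBidegree n 0

lemma mem_standardExponents {n : ℕ} (hn : 2 ≤ n) {m : Fin 4 →₀ ℕ} :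
    m ∈ standardExponents n ↔
      m.degree = n ∧ ¬(2 ≤ m 0 + m 1 ∧ 1 ≤ m 2 + m 3) := by
  simp only [standardExponents, Finset.mem_union, mem_exponentsOfBidegree, Finsupp.degree_eq_sum,
    Fin.sum_univ_four]
  omega

lemma card_standardExponents {n : ℕ} (hn : 2 ≤ n) : (standardExponents n).card = 4 * n + 2 := by
  rw [standardExponents, Finset.card_union_of_disjoint, Finset.card_union_of_disjoint]
  · simp only [card_exponentsOfBidegree]
    omega
  all_goals
    simp only [Finset.disjoint_left, Finset.mem_union, mem_exponentsOfBidegree]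
    omega

end Bidegree

section GradedPieces

variable {R k : Type*} [Field k]

/-- The ideal `(x,y)²(z,w)` of the union of the first infinitesimal neighbourhood of
`Y = {x = y = 0}` and the line `L = {z = w = 0}`. -/
noncomputable abbrev thickenedLineUnionIdeal (R : Type*) [CommSemiring R] :
    Ideal (MvPolynomial (Fin 4) R) :=
  Ideal.span {X 0, X 1} ^ 2 * Ideal.span {X 2, X 3}

lemma mem_thickenedLineUnionIdeal_iff [CommSemiring R] {p : MvPolynomial (Fin 4) R} :
    p ∈ thickenedLineUnionIdeal R ↔ ∀ m ∈ p.support, 2 ≤ m 0 + m 1 ∧ 1 ≤ m 2 + m 3 := by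
  simpa [Set.image_pair] using
    mem_span_X_image_pow_mul_iff (s := {0, 1}) (t := {2, 3}) (by decide) (a := 2) (b := 1) (p := p)

theorem gradedPieceDim_thickenedLineUnionIdeal_sup_span_singleton {a n : ℕ}
    {q : MvPolynomial (Fin 4) k} (hq0 : q ≠ 0)
    (hq : q ∈ restrictSupport k (exponentsOfBidegree 1 (a + 1))) (hn : a + 2 ≤ n) :
    gradedPieceDim k (thickenedLineUnionIdeal k ⊔ Ideal.span {q}) n = 3 * n + 3 + a := by
  have hn2 : 2 ≤ n := by omega
  suffices hdim : gradedPieceDim k (thickenedLineUnionIdeal k ⊔ Ideal.span {q}) n +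
      (exponentsOfBidegree 0 (n - (a + 2))).card = (standardExponents n).card by
    rw [card_exponentsOfBidegree, card_standardExponents hn2] at hdim
    omega
  rw [gradedPieceDim, homogeneousSubmodule_eq_restrictSupport]
  refine finrank_map_mkₐ_sup_span_singleton_add_card ?_ ?_ ?_ hq0 hq ?_ ?_
  · exact fun m hm => ((mem_standardExponents hn2).1 hm).1
  · intro m hmn hm
    have hmI := not_and_not_right.1 (mt (mem_standardExponents hn2).2 hm) hmn
    refine mem_thickenedLineUnionIdeal_iff.2 fun m' hm' => ?_
    rwa [Finset.mem_singleton.1 (support_monomial_subset hm')]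
  · exact fun p hp m hm hmb => ((mem_standardExponents hn2).1 hmb).2
      (mem_thickenedLineUnionIdeal_iff.1 hp m hm)
  all_goals
    simp only [Finset.mem_coe, mem_standardExponents hn2, mem_exponentsOfBidegree,
      Finsupp.degree_eq_sum, Fin.sum_univ_four, Finsupp.add_apply]
    omega

lemma mem_restrictSupport_exponentsOfBidegree_zero [CommSemiring R] {d : ℕ}
    {p : MvPolynomial (Fin 4) R}
    (hp : p ∈ supported R ({2, 3} : Set (Fin 4))) (hpd : p.IsHomogeneous d) :
    p ∈ restrictSupport R (exponentsOfBidegree 0 d) := by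
  intro m hm
  have hm0 : m 0 = 0 := apply_eq_zero_of_mem_supported hp hm (by decide)
  have hm1 : m 1 = 0 := apply_eq_zero_of_mem_supported hp hm (by decide)
  have hmd : m.degree = d := (hpd.degree_eq_sum_deg_support hm).symm
  rw [Finsupp.degree_eq_sum, Fin.sum_univ_four] at hmd
  rw [Finset.mem_coe, mem_exponentsOfBidegree]
  omega

lemma X_mul_sub_X_mul_mem_restrictSupport [CommRing R] {d : ℕ} {f g : MvPolynomial (Fin 4) R}
    (hf : f ∈ restrictSupport R (exponentsOfBidegree 0 d))
    (hg : g ∈ restrictSupport R (exponentsOfBidegree 0 d)) :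
    X 0 * g - X 1 * f ∈ restrictSupport R (exponentsOfBidegree 1 d) := by
  have hX0 : (X 0 : MvPolynomial (Fin 4) R) ∈ restrictSupport R (exponentsOfBidegree 1 0) :=
    (monomial_mem_restrictSupport R).2 (Or.inl (by simp))
  have hX1 : (X 1 : MvPolynomial (Fin 4) R) ∈ restrictSupport R (exponentsOfBidegree 1 0) :=
    (monomial_mem_restrictSupport R).2 (Or.inl (by simp))
  refine Submodule.sub_mem _ (mul_mem_restrictSupport hX0 hg ?_)
    (mul_mem_restrictSupport hX1 hf ?_)
  all_goals
    simp only [Finset.mem_coe, mem_exponentsOfBidegree, Finsupp.add_apply]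
    omega

lemma X_mul_sub_X_mul_ne_zero [CommRing R] {f g : MvPolynomial (Fin 4) R}
    (hf : f ∈ supported R ({2, 3} : Set (Fin 4))) (hg : g ∈ supported R ({2, 3} : Set (Fin 4)))
    (hfg : f ≠ 0 ∨ g ≠ 0) : X 0 * g - X 1 * f ≠ 0 := by
  have haeval (s t : MvPolynomial (Fin 4) R) :
      aeval ![s, t, X 2, X 3] (X 0 * g - X 1 * f) = s * g - t * f := by
    have hv : ∀ i ∈ ({2, 3} : Set (Fin 4)), ![s, t, X 2, X 3] i = X i := by
      rintro i (rfl | rfl) <;> rfl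
    rw [map_sub, map_mul, map_mul, aeval_eq_self_of_mem_supported hf hv,
      aeval_eq_self_of_mem_supported hg hv, aeval_X, aeval_X]
    rfl
  intro hq
  have hf0 : f = 0 := by simpa [hq] using haeval 0 1
  have hg0 : g = 0 := by simpa [hq] using (haeval 1 0).symm
  exact hfg.elim (· hf0) (· hg0)

lemma NoCommonZerosAlongY.ne_zero_or_ne_zero {f g : MvPolynomial (Fin 4) k}
    (hfg : NoCommonZerosAlongY f g) : f ≠ 0 ∨ g ≠ 0 :=
  (hfg 1 0 (by simp)).imp (by rintro h rfl; simp at h) (by rintro h rfl; simp at h)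

theorem stmt_15_general (a : ℕ) (f g : MvPolynomial (Fin 4) k)
    (hfzw : f ∈ supported k ({2, 3} : Set (Fin 4)))
    (hgzw : g ∈ supported k ({2, 3} : Set (Fin 4)))
    (hf : f.IsHomogeneous (a + 1)) (hg : g.IsHomogeneous (a + 1)) (hfg : f ≠ 0 ∨ g ≠ 0)
    {n : ℕ} (hn : a + 2 ≤ n) :
    gradedPieceDim k
        ((Ideal.span {X 0, X 1} : Ideal (MvPolynomial (Fin 4) k)) ^ 2 * Ideal.span {X 2, X 3}
          + Ideal.span {X 0 * g - X 1 * f}) n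
      = 3 * n + 3 + a :=
  gradedPieceDim_thickenedLineUnionIdeal_sup_span_singleton (X_mul_sub_X_mul_ne_zero hfzw hgzw hfg)
    (X_mul_sub_X_mul_mem_restrictSupport (mem_restrictSupport_exponentsOfBidegree_zero hfzw hf)
      (mem_restrictSupport_exponentsOfBidegree_zero hgzw hg)) hn

end GradedPieces

/-- for `J = (x,y)²·(z,w) + (xg − yf)`, the Hilbert polynomial of `S/J` is
`3n + 3 + a`: the disjoint union `W = Z ∪ L` of the double line `Z` with ideal
`(x², xy, y², xg−yf)` and the line `L = {z = w = 0}` is a curve of degree `3` and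
arithmetic genus `−2−a`. -/
theorem stmt_15 {k : Type*} [Field k] [IsAlgClosed k] (a : ℕ)
    (f g : MvPolynomial (Fin 4) k)
    (hfzw : f ∈ supported k ({2, 3} : Set (Fin 4)))
    (hgzw : g ∈ supported k ({2, 3} : Set (Fin 4)))
    (hf : f.IsHomogeneous (a + 1)) (hg : g.IsHomogeneous (a + 1))
    (hfg : NoCommonZerosAlongY f g) :
    ∃ N : ℕ, ∀ n : ℕ, N ≤ n →
      (gradedPieceDim k
          ((Ideal.span {X 0, X 1} : Ideal (MvPolynomial (Fin 4) k)) ^ 2 * Ideal.span {X 2, X 3}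
            + Ideal.span {X 0 * g - X 1 * f}) n : ℤ)
        = 3 * n + 3 + a := by
  exact ⟨a + 2, fun n hn => mod_cast
    stmt_15_general a f g hfzw hgzw hf hg hfg.ne_zero_or_ne_zero hn⟩
end

section
/- Let a, b ≥ 0 be integers and let J ⊂ S be the ideal generated by x³, x²y, xy², y³, x·y·z^{a+1}, x²·w^{a+b}, x·y·w^{2a+b+1}, and x·z^{3a+b+3} − y²·w^{3a+b+2}. Then there exists an integer N ≥ 0 such that (x², xy, y³, x·z^{3a+b+3} − y²·w^{3a+b+2})·(x,y,z,w)^N ⊆ J. (In other words, the saturation of J with respect to the irrelevant ideal (x,y,z,w) contains the ideal (x², xy, y³, xz^{3a+b+3} − y²w^{3a+b+2}), the total ideal of an extremal triple line of type (−1, 3a+b+3); this is the key computation showing that a flat family of triple lines of type (a,b) degenerates to a triple line of type (−1, 3a+b+3).) -/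
open MvPolynomial

/-
Because the irrelevant ideal is finitely generated, some power of it multiplies the first ideal
into `J` as soon as every variable has a power multiplying each generator into `J`. Only `x²` and
`xy` need such a power, as the other two generators lie in `J`, and the suitable products are
monomial generators of `J`, except for `x² z ^ m = x (x z ^ m - y² w ^ n) + x y² w ^ n`.
-/

section Colon

variable {R : Type*} [CommSemiring R]

lemma mul_le_iff_le_colon {I J L : Ideal R} : I * L ≤ J ↔ L ≤ J.colon (I : Set R) := by
  rw [mul_comm, Ideal.mul_le]
  simp only [SetLike.le_def, Submodule.mem_colon, SetLike.mem_coe, smul_eq_mul]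

lemma exists_mul_pow_le_iff_le_radical_colon {I J M : Ideal R} (hM : M.FG) :
    (∃ N : ℕ, I * M ^ N ≤ J) ↔ M ≤ (J.colon (I : Set R)).radical := by
  simp only [mul_le_iff_le_colon]
  refine ⟨fun ⟨N, hN⟩ v hv ↦ ⟨N, hN (Ideal.pow_mem_pow hv N)⟩, fun h ↦ ?_⟩
  exact Ideal.exists_pow_le_of_le_radical_of_fg h hM

lemma mem_radical_colon_iff_of_finite {J : Ideal R} {s : Set R} (hs : s.Finite) {v : R} :
    v ∈ (J.colon s).radical ↔ ∀ p ∈ s, ∃ n : ℕ, p * v ^ n ∈ J := by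
  induction s, hs using Set.Finite.induction_on with
  | empty => simp [Ideal.radical_top]
  | insert _ _ ih =>
    rw [Set.insert_eq, Submodule.colon_union, Ideal.radical_inf, Ideal.mem_inf, ih,
      ← Set.insert_eq, Set.forall_mem_insert]
    simp only [Ideal.mem_radical_iff, Submodule.mem_colon_singleton, smul_eq_mul, mul_comm]

lemma exists_span_mul_span_pow_le_iff {J : Ideal R} {s t : Set R} (hs : s.Finite)
    (ht : t.Finite) :
    (∃ N : ℕ, Ideal.span s * Ideal.span t ^ N ≤ J) ↔
      ∀ p ∈ s, ∀ v ∈ t, ∃ n : ℕ, p * v ^ n ∈ J := by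
  rw [exists_mul_pow_le_iff_le_radical_colon (Submodule.fg_span ht), Ideal.span_le,
    Ideal.colon_span]
  simp only [Set.subset_def, SetLike.mem_coe, mem_radical_colon_iff_of_finite hs]
  exact ⟨fun h p hp v hv ↦ h v hv p hp, fun h v hv p hp ↦ h p hp v hv⟩

end Colon

lemma sq_mul_mem_of_mul_sub_mem {R : Type*} [CommRing R] {J : Ideal R} {x u v : R}
    (hsub : x * u - v ∈ J) (hv : x * v ∈ J) : x ^ 2 * u ∈ J := by
  have hsum : x ^ 2 * u = x * (x * u - v) + x * v := by ring
  exact hsum ▸ J.add_mem (J.mul_mem_left x hsub) hv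

theorem stmt_16_general {R : Type*} [CommRing R] (x y z w : R) (c d e m n : ℕ) :
    ∃ N : ℕ,
      Ideal.span {x ^ 2, x * y, y ^ 3, x * z ^ m - y ^ 2 * w ^ n}
        * Ideal.span {x, y, z, w} ^ N
      ≤ Ideal.span {x ^ 3, x ^ 2 * y, x * y ^ 2, y ^ 3,
          x * y * z ^ c, x ^ 2 * w ^ d, x * y * w ^ e, x * z ^ m - y ^ 2 * w ^ n} := by
  set G : Set R := {x ^ 3, x ^ 2 * y, x * y ^ 2, y ^ 3,
    x * y * z ^ c, x ^ 2 * w ^ d, x * y * w ^ e, x * z ^ m - y ^ 2 * w ^ n} with hG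
  have hgen : G ⊆ Ideal.span G := Ideal.subset_span
  generalize Ideal.span G = J at hgen ⊢
  simp only [hG, Set.insert_subset_iff, Set.singleton_subset_iff, SetLike.mem_coe] at hgen
  obtain ⟨hx3, hx2y, hxy2, hy3, hxyz, hx2w, hxyw, hsub⟩ := hgen
  have hx2z : x ^ 2 * z ^ m ∈ J :=
    sq_mul_mem_of_mul_sub_mem hsub (mul_assoc x _ _ ▸ J.mul_mem_right _ hxy2)
  rw [exists_span_mul_span_pow_le_iff (Set.toFinite _) (Set.toFinite _)]
  simp only [Set.forall_mem_insert, Set.mem_singleton_iff, forall_eq]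
  have hx2x : x ^ 2 * x ^ 1 ∈ J := by rwa [← pow_add]
  have hxyx : x * y * x ^ 1 ∈ J := by convert hx2y using 1; ring
  have hxyy : x * y * y ^ 1 ∈ J := by convert hxy2 using 1; ring
  have hof_mem {p : R} (hp : p ∈ J) (v : R) : ∃ i : ℕ, p * v ^ i ∈ J :=
    ⟨0, J.mul_mem_right _ hp⟩
  exact ⟨⟨⟨1, hx2x⟩, ⟨1, by rwa [pow_one]⟩, ⟨m, hx2z⟩, ⟨d, hx2w⟩⟩,
    ⟨⟨1, hxyx⟩, ⟨1, hxyy⟩, ⟨c, hxyz⟩, ⟨e, hxyw⟩⟩,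
    ⟨hof_mem hy3 x, hof_mem hy3 y, hof_mem hy3 z, hof_mem hy3 w⟩,
    ⟨hof_mem hsub x, hof_mem hsub y, hof_mem hsub z, hof_mem hsub w⟩⟩

/-- for `a, b ≥ 0`, the saturation with respect to the irrelevant ideal
`M = (x,y,z,w)` of the ideal
`J = (x³, x²y, xy², y³, xyz^{a+1}, x²w^{a+b}, xyw^{2a+b+1}, xz^{3a+b+3} − y²w^{3a+b+2})`
contains the ideal `(x², xy, y³, xz^{3a+b+3} − y²w^{3a+b+2})`, the total ideal of an
extremal triple line of type `(−1, 3a+b+3)`. -/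
theorem stmt_16 {k : Type*} [Field k] [IsAlgClosed k] (a b : ℕ) :
    ∃ N : ℕ,
      (Ideal.span {X 0 ^ 2, X 0 * X 1, X 1 ^ 3,
          X 0 * X 2 ^ (3 * a + b + 3) - X 1 ^ 2 * X 3 ^ (3 * a + b + 2)} :
        Ideal (MvPolynomial (Fin 4) k))
        * (Ideal.span {X 0, X 1, X 2, X 3} : Ideal (MvPolynomial (Fin 4) k)) ^ N
      ≤ Ideal.span {X 0 ^ 3, X 0 ^ 2 * X 1, X 0 * X 1 ^ 2, X 1 ^ 3,
          X 0 * X 1 * X 2 ^ (a + 1), X 0 ^ 2 * X 3 ^ (a + b),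
          X 0 * X 1 * X 3 ^ (2 * a + b + 1),
          X 0 * X 2 ^ (3 * a + b + 3) - X 1 ^ 2 * X 3 ^ (3 * a + b + 2)} :=
  stmt_16_general _ _ _ _ _ _ _ _ _
end
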